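/- Let (x̄,ȳ) be a nondegenerate T-stationary point of the regularized continuous reformulation R with T-index m, additionally satisfying NDT6 (σ̄_{1,i} ≠ 0 for all i ∈ a01(x̄,ȳ)). Then for every neighborhood U of (x̄,ȳ) there exists t̄ > 0 such that for every t ∈ (0, t̄) the Scholtes-type regularization S(t) possesses a nondegenerate Karush–Kuhn–Tucker point (x^t,y^t) ∈ U whose quadratic index equals m. -/

import Mathlib

open scoped Classical
open Finset Filter Topology

noncomputable section
namespace Scholtes

/-- Vectors in ℝⁿ. -/
abbrev Vec (n : ℕ) := Fin n → ℝ

variable {n : ℕ} {P Q : Type*} [Fintype P] [Fintype Q]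

/-- Euclidean dot product. -/
def dot (u v : Vec n) : ℝ := ∑ i, u i * v i

/-- Gradient: vector of partial derivatives. -/
def grad (f : Vec n → ℝ) (x : Vec n) : Vec n := fun i => fderiv ℝ f x (Pi.single i 1)

/-- Hessian bilinear form of `L` at `z`, evaluated at directions `ξ`, `ζ`. -/
def hess (L : Vec n × Vec n → ℝ) (z ξ ζ : Vec n × Vec n) : ℝ :=
  fderiv ℝ (fun w => fderiv ℝ L w ξ) z ζ

/-- The pair vector (e_i, 0) ∈ ℝ²ⁿ. -/
def ex (i : Fin n) : Vec n × Vec n := (Pi.single i 1, 0)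

/-- The pair vector (0, e_i) ∈ ℝ²ⁿ. -/
def ey (i : Fin n) : Vec n × Vec n := (0, Pi.single i 1)

/-- The pair vector (0, e) ∈ ℝ²ⁿ, where e is the all-ones vector. -/
def eAll : Vec n × Vec n := (0, fun _ => 1)

/-- The pair vector (y_i e_i, x_i e_i) ∈ ℝ²ⁿ. -/
def hvec (x y : Vec n) (i : Fin n) : Vec n × Vec n := (Pi.single i (y i), Pi.single i (x i))

/-- The number of negative eigenvalues of the bilinear form `B` restricted to the
(sub)space `T`, expressed as the maximal dimension of a linear subspace of `T` on
which the associated quadratic form is negative definite. -/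
def negIndex (B : (Vec n × Vec n) → (Vec n × Vec n) → ℝ) (T : (Vec n × Vec n) → Prop) : ℕ :=
  sSup {d : ℕ | ∃ W : Submodule ℝ (Vec n × Vec n),
    (∀ ξ ∈ W, T ξ) ∧ Module.finrank ℝ W = d ∧ ∀ ξ ∈ W, ξ ≠ 0 → B ξ ξ < 0}

/-- The data and standing assumptions of the paper: objective `f`, equality
constraints `h`, inequality constraints `g`, positive pairwise different linear
coefficients `c`, cardinality bound `s` and regularization parameter `ε`. -/
structure Setting (n : ℕ) (P Q : Type*) [Fintype P] [Fintype Q] where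
  f : Vec n → ℝ
  h : P → Vec n → ℝ
  g : Q → Vec n → ℝ
  c : Vec n
  s : ℕ
  ε : ℝ
  hn : 1 ≤ n
  hf : ContDiff ℝ 2 f
  hh : ∀ p, ContDiff ℝ 2 (h p)
  hg : ∀ q, ContDiff ℝ 2 (g q)
  hcpos : ∀ i, 0 < c i
  hcinj : Function.Injective c
  hs : s < n
  hεpos : 0 < ε
  hεle : ε ≤ 1 / ((n : ℝ) - s)

/-- Index set a01: x̄_i = 0, ȳ_i > 0. -/
def a01 (x y : Vec n) : Finset (Fin n) := univ.filter fun i => x i = 0 ∧ 0 < y i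

/-- Index set a10: x̄_i ≠ 0, ȳ_i = 0. -/
def a10 (x y : Vec n) : Finset (Fin n) := univ.filter fun i => x i ≠ 0 ∧ y i = 0

/-- Index set a00: x̄_i = 0, ȳ_i = 0. -/
def a00 (x y : Vec n) : Finset (Fin n) := univ.filter fun i => x i = 0 ∧ y i = 0

/-- Index set N(y): y_i = 0. -/
def Nact (y : Vec n) : Finset (Fin n) := univ.filter fun i => y i = 0

/-- Index set H≥(x,y): x_i y_i = −t. -/
def Hge (t : ℝ) (x y : Vec n) : Finset (Fin n) := univ.filter fun i => x i * y i = -t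

/-- Index set H≤(x,y): x_i y_i = t. -/
def Hle (t : ℝ) (x y : Vec n) : Finset (Fin n) := univ.filter fun i => x i * y i = t

/-- Index set H(x,y) = H≥ ∪ H≤. -/
def Hact (t : ℝ) (x y : Vec n) : Finset (Fin n) := Hge t x y ∪ Hle t x y

/-- Active inequality constraints Q0(x). -/
def Q0 (D : Setting n P Q) (x : Vec n) : Finset Q := univ.filter fun q => D.g q x = 0

/-- Active upper bounds E(y): y_i = 1 + ε. -/
def Eact (D : Setting n P Q) (y : Vec n) : Finset (Fin n) := univ.filter fun i => y i = 1 + D.ε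

/-- Index set O(x,y) = complement of E(y) ∪ N(y) ∪ H(x,y). -/
def Oact (D : Setting n P Q) (t : ℝ) (x y : Vec n) : Finset (Fin n) :=
  (Eact D y ∪ Nact y ∪ Hact t x y)ᶜ

/-- Feasibility for the regularized continuous reformulation R. -/
def feasR (D : Setting n P Q) (x y : Vec n) : Prop :=
  (∀ p, D.h p x = 0) ∧ (∀ q, 0 ≤ D.g q x) ∧ ((n : ℝ) - D.s ≤ ∑ i, y i) ∧
  (∀ i, x i * y i = 0) ∧ (∀ i, 0 ≤ y i ∧ y i ≤ 1 + D.ε)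

/-- Feasibility for the Scholtes-type regularization S(t). -/
def feasS (D : Setting n P Q) (t : ℝ) (x y : Vec n) : Prop :=
  (∀ p, D.h p x = 0) ∧ (∀ q, 0 ≤ D.g q x) ∧ ((n : ℝ) - D.s ≤ ∑ i, y i) ∧
  (∀ i, -t ≤ x i * y i ∧ x i * y i ≤ t) ∧ (∀ i, 0 ≤ y i ∧ y i ≤ 1 + D.ε)

/-- Multipliers for T-stationarity (defined on the whole index ranges). -/
structure TMult (n : ℕ) (P Q : Type*) where
  lam : P → ℝ
  mu1 : Q → ℝ
  mu2 : Fin n → ℝ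
  mu3 : ℝ
  sig1 : Fin n → ℝ
  sig2 : Fin n → ℝ
  rho1 : Fin n → ℝ
  rho2 : Fin n → ℝ

/-- The T-stationarity equation (1) of Definition 2. -/
def TStatEq (D : Setting n P Q) (x y : Vec n) (M : TMult n P Q) : Prop :=
  ((grad D.f x, D.c) : Vec n × Vec n) =
    (∑ p, M.lam p • ((grad (D.h p) x, (0 : Vec n)) : Vec n × Vec n))
    + (∑ q ∈ Q0 D x, M.mu1 q • ((grad (D.g q) x, (0 : Vec n)) : Vec n × Vec n))
    - (∑ i ∈ Eact D y, M.mu2 i • ey i)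
    + M.mu3 • eAll
    + (∑ i ∈ a01 x y, M.sig1 i • ex i)
    + (∑ i ∈ a10 x y, M.sig2 i • ey i)
    + (∑ i ∈ a00 x y, (M.rho1 i • ex i + M.rho2 i • ey i))

/-- (x,y) is a T-stationary point of R with multipliers M. -/
def TStatAt (D : Setting n P Q) (x y : Vec n) (M : TMult n P Q) : Prop :=
  feasR D x y ∧
  (∀ q ∈ Q0 D x, 0 ≤ M.mu1 q) ∧
  (∀ i ∈ Eact D y, 0 ≤ M.mu2 i) ∧
  0 ≤ M.mu3 ∧
  M.mu3 * ((∑ i, y i) - ((n : ℝ) - D.s)) = 0 ∧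
  (∀ i ∈ a00 x y, M.rho1 i = 0 ∨ M.rho2 i ≤ 0) ∧
  TStatEq D x y M

/-- (x,y) is a T-stationary point of R. -/
def TStat (D : Setting n P Q) (x y : Vec n) : Prop := ∃ M, TStatAt D x y M

/-- MPOC-tailored LICQ at a feasible point (x,y) of R: the indicated family of
vectors in ℝ²ⁿ is linearly independent. -/
def MPOC_LICQ (D : Setting n P Q) (x y : Vec n) : Prop :=
  ∀ (lam : P → ℝ) (mu1 : Q → ℝ) (mu2 : Fin n → ℝ) (mu3 : ℝ) (s1 s2 : Fin n → ℝ),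
    ((∑ i, y i) ≠ (n : ℝ) - D.s → mu3 = 0) →
    (∑ p, lam p • ((grad (D.h p) x, (0 : Vec n)) : Vec n × Vec n))
    + (∑ q ∈ Q0 D x, mu1 q • ((grad (D.g q) x, (0 : Vec n)) : Vec n × Vec n))
    + (∑ i ∈ Eact D y, mu2 i • ey i)
    + mu3 • eAll
    + (∑ i ∈ a01 x y ∪ a00 x y, s1 i • ex i)
    + (∑ i ∈ a10 x y ∪ a00 x y, s2 i • ey i) = 0 →
    (∀ p, lam p = 0) ∧ (∀ q ∈ Q0 D x, mu1 q = 0) ∧ (∀ i ∈ Eact D y, mu2 i = 0) ∧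
    mu3 = 0 ∧ (∀ i ∈ a01 x y ∪ a00 x y, s1 i = 0) ∧ (∀ i ∈ a10 x y ∪ a00 x y, s2 i = 0)

/-- The Lagrange function L^R associated with the T-stationary point (x̄,ȳ)
and multipliers M. -/
def LagR (D : Setting n P Q) (xb yb : Vec n) (M : TMult n P Q) (z : Vec n × Vec n) : ℝ :=
  D.f z.1 + dot D.c z.2
    - (∑ p, M.lam p * D.h p z.1)
    - (∑ q ∈ Q0 D xb, M.mu1 q * D.g q z.1)
    + (∑ i ∈ Eact D yb, M.mu2 i * (z.2 i - (1 + D.ε)))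
    - M.mu3 * ((∑ i, z.2 i) - ((n : ℝ) - D.s))
    - (∑ i ∈ a01 xb yb, M.sig1 i * z.1 i)
    - (∑ i ∈ a10 xb yb, M.sig2 i * z.2 i)
    - (∑ i ∈ a00 xb yb, (M.rho1 i * z.1 i + M.rho2 i * z.2 i))

/-- Membership in the tangent space T^R at (x̄,ȳ). -/
def inTR (D : Setting n P Q) (x y : Vec n) (ξ : Vec n × Vec n) : Prop :=
  (∀ p, dot (grad (D.h p) x) ξ.1 = 0) ∧
  (∀ q ∈ Q0 D x, dot (grad (D.g q) x) ξ.1 = 0) ∧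
  (∀ i ∈ Eact D y, ξ.2 i = 0) ∧
  ((∑ i, y i) = (n : ℝ) - D.s → (∑ i, ξ.2 i) = 0) ∧
  (∀ i ∈ a00 x y ∪ a01 x y, ξ.1 i = 0) ∧
  (∀ i ∈ a00 x y ∪ a10 x y, ξ.2 i = 0)

/-- Nondegenerate T-stationary point with multipliers M (NDT1–NDT4). -/
def NondegTStatAt (D : Setting n P Q) (x y : Vec n) (M : TMult n P Q) : Prop :=
  TStatAt D x y M ∧
  MPOC_LICQ D x y ∧
  (∀ q ∈ Q0 D x, 0 < M.mu1 q) ∧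
  (∀ i ∈ Eact D y, 0 < M.mu2 i) ∧
  ((∑ i, y i) = (n : ℝ) - D.s → 0 < M.mu3) ∧
  (∀ i ∈ a00 x y, M.rho1 i ≠ 0 ∧ M.rho2 i < 0) ∧
  (∀ ξ, inTR D x y ξ → (∀ ζ, inTR D x y ζ → hess (LagR D x y M) (x, y) ξ ζ = 0) → ξ = 0)

/-- T-index: quadratic index (number of negative eigenvalues of the restricted
Hessian of L^R) plus the biactive index |a00|. -/
def TIndex (D : Setting n P Q) (x y : Vec n) (M : TMult n P Q) : ℕ :=
  negIndex (hess (LagR D x y M) (x, y)) (inTR D x y) + (a00 x y).card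

/-- Multipliers for KKT points of S(t) (defined on the whole index ranges). -/
structure SMult (n : ℕ) (P Q : Type*) where
  lam : P → ℝ
  mu1 : Q → ℝ
  mu2 : Fin n → ℝ
  mu3 : ℝ
  etaGe : Fin n → ℝ
  etaLe : Fin n → ℝ
  nu : Fin n → ℝ

/-- The KKT equation for S(t). -/
def KKTEq (D : Setting n P Q) (t : ℝ) (x y : Vec n) (M : SMult n P Q) : Prop :=
  ((grad D.f x, D.c) : Vec n × Vec n) =
    (∑ p, M.lam p • ((grad (D.h p) x, (0 : Vec n)) : Vec n × Vec n))
    + (∑ q ∈ Q0 D x, M.mu1 q • ((grad (D.g q) x, (0 : Vec n)) : Vec n × Vec n))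
    - (∑ i ∈ Eact D y, M.mu2 i • ey i)
    + M.mu3 • eAll
    + (∑ i ∈ Hge t x y, M.etaGe i • hvec x y i)
    - (∑ i ∈ Hle t x y, M.etaLe i • hvec x y i)
    + (∑ i ∈ Nact y, M.nu i • ey i)

/-- (x,y) is a KKT point of S(t) with multipliers M. -/
def KKTAt (D : Setting n P Q) (t : ℝ) (x y : Vec n) (M : SMult n P Q) : Prop :=
  feasS D t x y ∧
  (∀ q ∈ Q0 D x, 0 ≤ M.mu1 q) ∧
  (∀ i ∈ Eact D y, 0 ≤ M.mu2 i) ∧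
  0 ≤ M.mu3 ∧
  M.mu3 * ((∑ i, y i) - ((n : ℝ) - D.s)) = 0 ∧
  (∀ i ∈ Hge t x y, 0 ≤ M.etaGe i) ∧
  (∀ i ∈ Hle t x y, 0 ≤ M.etaLe i) ∧
  (∀ i ∈ Nact y, 0 ≤ M.nu i) ∧
  KKTEq D t x y M

/-- (x,y) is a KKT point of S(t). -/
def KKT (D : Setting n P Q) (t : ℝ) (x y : Vec n) : Prop := ∃ M, KKTAt D t x y M

/-- LICQ at a feasible point (x,y) of S(t). -/
def LICQ (D : Setting n P Q) (t : ℝ) (x y : Vec n) : Prop :=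
  ∀ (lam : P → ℝ) (mu1 : Q → ℝ) (mu2 : Fin n → ℝ) (mu3 : ℝ) (eta nu : Fin n → ℝ),
    ((∑ i, y i) ≠ (n : ℝ) - D.s → mu3 = 0) →
    (∑ p, lam p • ((grad (D.h p) x, (0 : Vec n)) : Vec n × Vec n))
    + (∑ q ∈ Q0 D x, mu1 q • ((grad (D.g q) x, (0 : Vec n)) : Vec n × Vec n))
    + (∑ i ∈ Eact D y, mu2 i • ey i)
    + mu3 • eAll
    + (∑ i ∈ Hact t x y, eta i • hvec x y i)
    + (∑ i ∈ Nact y, nu i • ey i) = 0 →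
    (∀ p, lam p = 0) ∧ (∀ q ∈ Q0 D x, mu1 q = 0) ∧ (∀ i ∈ Eact D y, mu2 i = 0) ∧
    mu3 = 0 ∧ (∀ i ∈ Hact t x y, eta i = 0) ∧ (∀ i ∈ Nact y, nu i = 0)

/-- The Lagrange function L^S associated with the KKT point (x̄,ȳ) of S(t)
and multipliers M. -/
def LagS (D : Setting n P Q) (t : ℝ) (xb yb : Vec n) (M : SMult n P Q)
    (z : Vec n × Vec n) : ℝ :=
  D.f z.1 + dot D.c z.2
    - (∑ p, M.lam p * D.h p z.1)
    - (∑ q ∈ Q0 D xb, M.mu1 q * D.g q z.1)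
    + (∑ i ∈ Eact D yb, M.mu2 i * (z.2 i - (1 + D.ε)))
    - M.mu3 * ((∑ i, z.2 i) - ((n : ℝ) - D.s))
    - (∑ i ∈ Hge t xb yb, M.etaGe i * (z.1 i * z.2 i + t))
    + (∑ i ∈ Hle t xb yb, M.etaLe i * (z.1 i * z.2 i - t))
    - (∑ i ∈ Nact yb, M.nu i * z.2 i)

/-- Membership in the tangent space T^S at (x,y) for S(t). -/
def inTS (D : Setting n P Q) (t : ℝ) (x y : Vec n) (ξ : Vec n × Vec n) : Prop :=
  (∀ p, dot (grad (D.h p) x) ξ.1 = 0) ∧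
  (∀ q ∈ Q0 D x, dot (grad (D.g q) x) ξ.1 = 0) ∧
  (∀ i ∈ Eact D y, ξ.2 i = 0) ∧
  ((∑ i, y i) = (n : ℝ) - D.s → (∑ i, ξ.2 i) = 0) ∧
  (∀ i ∈ Hact t x y, y i * ξ.1 i + x i * ξ.2 i = 0) ∧
  (∀ i ∈ Nact y, ξ.2 i = 0)

/-- Nondegenerate KKT point of S(t) with multipliers M (ND1–ND3). -/
def NondegKKTAt (D : Setting n P Q) (t : ℝ) (x y : Vec n) (M : SMult n P Q) : Prop :=
  KKTAt D t x y M ∧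
  LICQ D t x y ∧
  (∀ q ∈ Q0 D x, 0 < M.mu1 q) ∧
  (∀ i ∈ Eact D y, 0 < M.mu2 i) ∧
  (∀ i ∈ Hge t x y, 0 < M.etaGe i) ∧
  (∀ i ∈ Hle t x y, 0 < M.etaLe i) ∧
  (∀ i ∈ Nact y, 0 < M.nu i) ∧
  ((∑ i, y i) = (n : ℝ) - D.s → 0 < M.mu3) ∧
  (∀ ξ, inTS D t x y ξ → (∀ ζ, inTS D t x y ζ → hess (LagS D t x y M) (x, y) ξ ζ = 0) → ξ = 0)

/-- Quadratic index of a KKT point of S(t): number of negative eigenvalues of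
the restricted Hessian of L^S. -/
def QIdx (D : Setting n P Q) (t : ℝ) (x y : Vec n) (M : SMult n P Q) : ℕ :=
  negIndex (hess (LagS D t x y M) (x, y)) (inTS D t x y)

/-! ### Inertia of bilinear forms with nearly diagonal Gram matrix -/

/-- The Gram matrix of `b` with respect to `B` differs entrywise by at most `δ` from the diagonal
matrix with entries `d`. -/
def NearDiag {ι Z : Type*} [AddCommGroup Z] [Module ℝ Z] (B : Z →ₗ[ℝ] Z →ₗ[ℝ] ℝ) (b : ι → Z)
    (d : ι → ℝ) (δ : ℝ) : Prop :=
  ∀ j k, |B (b j) (b k) - (if j = k then d j else 0)| ≤ δ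

section Gram

variable {ι Z : Type*} [Fintype ι] [AddCommGroup Z] [Module ℝ Z] {B : Z →ₗ[ℝ] Z →ₗ[ℝ] ℝ}
  {b : ι → Z} {d : ι → ℝ} {δ : ℝ}

theorem NearDiag.abs_apply_sub_le (hB : NearDiag B b d δ) (v w : ι → ℝ) :
    |B (∑ j, v j • b j) (∑ k, w k • b k) - ∑ j, d j * (v j * w j)|
      ≤ δ * ((∑ j, |v j|) * ∑ k, |w k|) := by
  have h1 : B (∑ j, v j • b j) (∑ k, w k • b k) - ∑ j, d j * (v j * w j)
      = ∑ j, ∑ k, v j * w k * (B (b j) (b k) - (if j = k then d j else 0)) := by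
    simp only [map_sum, LinearMap.sum_apply, map_smul, LinearMap.smul_apply, smul_eq_mul, mul_sub,
      Finset.sum_sub_distrib, mul_ite, mul_zero, Finset.sum_ite_eq, Finset.mem_univ, if_true,
      Finset.mul_sum]
    congr 1
    · rw [Finset.sum_comm]
      refine Finset.sum_congr rfl fun _ _ => Finset.sum_congr rfl fun _ _ => by ring
    · exact Finset.sum_congr rfl fun _ _ => by ring
  rw [h1, Finset.sum_mul_sum, Finset.mul_sum]
  refine (Finset.abs_sum_le_sum_abs _ _).trans (Finset.sum_le_sum fun j _ => ?_)
  rw [Finset.mul_sum]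
  refine (Finset.abs_sum_le_sum_abs _ _).trans (Finset.sum_le_sum fun k _ => ?_)
  rw [abs_mul, abs_mul, mul_comm δ]
  exact mul_le_mul_of_nonneg_left (hB j k) (by positivity)

theorem NearDiag.apply_sign_pos (hB : NearDiag B b d δ) (hδ : 0 ≤ δ)
    (hd : ∀ j, δ * Fintype.card ι < |d j|) {v : ι → ℝ} (hv : v ≠ 0) :
    0 < B (∑ j, v j • b j) (∑ k, (Real.sign (d k) * v k) • b k) := by
  have h1 := (abs_le.1 (hB.abs_apply_sub_le v fun k => Real.sign (d k) * v k)).1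
  have hsd : ∀ j, d j ≠ 0 := fun j h => by
    have := hd j
    rw [h, abs_zero] at this
    exact absurd this (not_lt.2 (by positivity))
  have hsgn : ∀ j, |Real.sign (d j)| = 1 := fun j => by
    rcases Real.sign_apply_eq_of_ne_zero _ (hsd j) with h | h <;> simp [h]
  have habs : ∀ j, d j * Real.sign (d j) = |d j| := fun j => by
    rcases lt_or_gt_of_ne (hsd j) with h | h
    · simp [Real.sign_of_neg h, abs_of_neg h]
    · simp [Real.sign_of_pos h, abs_of_pos h]
  have h2 : ∑ j, d j * (v j * (Real.sign (d j) * v j)) = ∑ j, |d j| * v j ^ 2 :=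
    Finset.sum_congr rfl fun j _ => by rw [← habs j]; ring
  simp only [abs_mul, hsgn, one_mul] at h1
  rw [h2, ← pow_two] at h1
  have h3 : (∑ j, |v j|) ^ 2 ≤ Fintype.card ι * ∑ j, v j ^ 2 := by
    have := sq_sum_le_card_mul_sum_sq (s := Finset.univ) (f := fun j => |v j|)
    simpa [sq_abs] using this
  have h4 : 0 < ∑ j, (|d j| - δ * Fintype.card ι) * v j ^ 2 := by
    obtain ⟨j, hj⟩ := Function.ne_iff.1 hv
    refine Finset.sum_pos' (fun k _ => mul_nonneg (sub_nonneg.2 (hd k).le) (sq_nonneg _))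
      ⟨j, Finset.mem_univ _, mul_pos (sub_pos.2 (hd j)) (sq_pos_of_ne_zero hj)⟩
  simp only [sub_mul, Finset.sum_sub_distrib, ← Finset.mul_sum] at h4
  nlinarith [mul_le_mul_of_nonneg_left h3 hδ]

theorem NearDiag.eq_zero_of_forall (hB : NearDiag B b d δ) (hδ : 0 ≤ δ)
    (hd : ∀ j, δ * Fintype.card ι < |d j|) {v : ι → ℝ}
    (hv : ∀ k, B (∑ j, v j • b j) (b k) = 0) : v = 0 := by
  by_contra h
  have := hB.apply_sign_pos hδ hd h
  rw [map_sum, Finset.sum_eq_zero fun k _ => by rw [map_smul, hv k, smul_zero]] at this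
  exact lt_irrefl _ this

theorem NearDiag.linearIndependent (hB : NearDiag B b d δ) (hδ : 0 ≤ δ)
    (hd : ∀ j, δ * Fintype.card ι < |d j|) : LinearIndependent ℝ b := by
  rw [Fintype.linearIndependent_iff]
  intro v hv
  exact fun i => congrFun (hB.eq_zero_of_forall hδ hd (v := v) fun k => by simp [hv]) i

/-- A vector in the span of a subfamily of `b` is a combination with coefficients supported there. -/
theorem exists_coeff_of_mem_span_subtype {p : ι → Prop} {ξ : Z}
    (h : ξ ∈ Submodule.span ℝ (Set.range fun j : {j // p j} => b j)) :
    ∃ v : ι → ℝ, (∀ j, ¬ p j → v j = 0) ∧ ξ = ∑ j, v j • b j := by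
  obtain ⟨c, rfl⟩ := (Submodule.mem_span_range_iff_exists_fun ℝ).1 h
  refine ⟨fun j => if hj : p j then c ⟨j, hj⟩ else 0, fun j hj => by simp [hj], ?_⟩
  rw [← Finset.sum_subset (Finset.subset_univ (Finset.univ.filter p))
    (fun x _ hx => by
      have : ¬ p x := by simpa using hx
      simp [this])]
  rw [Finset.sum_subtype (Finset.univ.filter p) (p := p) (by simp)]
  refine Finset.sum_congr rfl fun j _ => by simp [j.2]

end Gram

theorem NearDiag.negIndex_eq {ι : Type*} [Fintype ι] {b : ι → Vec n × Vec n} {d : ι → ℝ} {δ : ℝ}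
    {B : (Vec n × Vec n) →ₗ[ℝ] (Vec n × Vec n) →ₗ[ℝ] ℝ} (hB : NearDiag B b d δ) (hδ : 0 ≤ δ)
    (hd : ∀ j, δ * Fintype.card ι < |d j|) {T : (Vec n × Vec n) → Prop}
    (hT : ∀ ξ, T ξ ↔ ξ ∈ Submodule.span ℝ (Set.range b)) :
    negIndex (fun ξ ζ => B ξ ζ) T = Fintype.card {j // d j < 0} := by
  have hli := hB.linearIndependent hδ hd
  have hne : ∀ j, d j ≠ 0 := fun j h => by
    have := hd j
    rw [h, abs_zero] at this
    exact absurd this (not_lt.2 (by positivity))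
  set Wn := Submodule.span ℝ (Set.range fun j : {j // d j < 0} => b j)
  set Wp := Submodule.span ℝ (Set.range fun j : {j // ¬ d j < 0} => b j)
  have hWn : Module.finrank ℝ Wn = Fintype.card {j // d j < 0} :=
    finrank_span_eq_card (hli.comp _ Subtype.val_injective)
  have hWp : Module.finrank ℝ Wp = Fintype.card {j // ¬ d j < 0} :=
    finrank_span_eq_card (hli.comp _ Subtype.val_injective)
  have hall : Module.finrank ℝ (Submodule.span ℝ (Set.range b)) = Fintype.card ι :=
    finrank_span_eq_card hli
  have hsub : ∀ p : ι → Prop, Submodule.span ℝ (Set.range fun j : {j // p j} => b j)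
      ≤ Submodule.span ℝ (Set.range b) := fun p =>
    Submodule.span_mono (by rintro _ ⟨j, rfl⟩; exact ⟨j, rfl⟩)
  have hneg : ∀ ξ ∈ Wn, ξ ≠ 0 → B ξ ξ < 0 := by
    intro ξ hξ h0
    obtain ⟨v, hv, rfl⟩ := exists_coeff_of_mem_span_subtype hξ
    have hv0 : v ≠ 0 := by rintro rfl; simp at h0
    have := hB.apply_sign_pos hδ hd hv0
    have h2 : ∀ k, (Real.sign (d k) * v k) = - v k := fun k => by
      by_cases hk : d k < 0
      · simp [Real.sign_of_neg hk]
      · simp [hv k hk]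
    simp only [h2, neg_smul, Finset.sum_neg_distrib, map_neg] at this
    linarith
  have hpos : ∀ ξ ∈ Wp, ξ ≠ 0 → 0 < B ξ ξ := by
    intro ξ hξ h0
    obtain ⟨v, hv, rfl⟩ := exists_coeff_of_mem_span_subtype hξ
    have hv0 : v ≠ 0 := by rintro rfl; simp at h0
    have := hB.apply_sign_pos hδ hd hv0
    have h2 : ∀ k, (Real.sign (d k) * v k) = v k := fun k => by
      by_cases hk : d k < 0
      · simp [hv k (not_not.2 hk)]
      · simp [Real.sign_of_pos (lt_of_le_of_ne (not_lt.1 hk) (hne k).symm)]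
    simpa only [h2] using this
  refine IsGreatest.csSup_eq ⟨⟨Wn, fun ξ hξ => (hT ξ).2 (hsub _ hξ), hWn, hneg⟩, ?_⟩
  rintro e ⟨W, hWT, rfl, hW⟩
  have hdisj : W ⊓ Wp = ⊥ := by
    rw [Submodule.eq_bot_iff]
    rintro ξ ⟨h1, h2⟩
    by_contra h0
    exact lt_asymm (hW ξ h1 h0) (hpos ξ h2 h0)
  have h1 := Submodule.finrank_sup_add_finrank_inf_eq W Wp
  rw [hdisj, finrank_bot, add_zero, hWp] at h1
  have h2 : Module.finrank ℝ ↥(W ⊔ Wp) ≤ Fintype.card ι := by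
    rw [← hall]
    exact Submodule.finrank_mono (sup_le (fun ξ hξ => (hT ξ).1 (hWT ξ hξ)) (hsub _))
  have h3 := Fintype.card_subtype_compl (fun j => d j < 0)
  have h4 := Fintype.card_subtype_le (fun j => d j < 0)
  omega

theorem NearDiag.eq_zero_of_mem {ι Z : Type*} [Fintype ι] [AddCommGroup Z] [Module ℝ Z]
    {B : Z →ₗ[ℝ] Z →ₗ[ℝ] ℝ} {b : ι → Z} {d : ι → ℝ} {δ : ℝ}
    (hB : NearDiag B b d δ) (hδ : 0 ≤ δ)
    (hd : ∀ j, δ * Fintype.card ι < |d j|) {ξ : Z}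
    (hξ : ξ ∈ Submodule.span ℝ (Set.range b)) (h : ∀ k, B ξ (b k) = 0) : ξ = 0 := by
  obtain ⟨v, rfl⟩ := (Submodule.mem_span_range_iff_exists_fun ℝ).1 hξ
  rw [hB.eq_zero_of_forall hδ hd h]
  simp

/-- A symmetric bilinear form without radical on a subspace has an orthogonal basis there. -/
theorem exists_orthogonal_family {Z : Type*} [AddCommGroup Z] [Module ℝ Z] [FiniteDimensional ℝ Z]
    (B : Z →ₗ[ℝ] Z →ₗ[ℝ] ℝ) (hs : ∀ ξ ζ, B ξ ζ = B ζ ξ) (T : Submodule ℝ Z)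
    (hT : ∀ ξ ∈ T, (∀ ζ ∈ T, B ξ ζ = 0) → ξ = 0) :
    ∃ b : Fin (Module.finrank ℝ T) → Z, Submodule.span ℝ (Set.range b) = T ∧
      (∀ j k, j ≠ k → B (b j) (b k) = 0) ∧ ∀ j, B (b j) (b j) ≠ 0 := by
  let B' : LinearMap.BilinForm ℝ T := B.compl₁₂ T.subtype T.subtype
  have hB' : LinearMap.IsSymm B' := ⟨fun x y => hs _ _⟩
  obtain ⟨v, hv⟩ := LinearMap.BilinForm.exists_orthogonal_basis hB'
  have hspan : Submodule.span ℝ (Set.range fun j => (v j : Z)) = T := by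
    have h1 : Set.range (fun j => (v j : Z)) = T.subtype '' Set.range v := by
      rw [← Set.range_comp]; rfl
    rw [h1, Submodule.span_image, v.span_eq, Submodule.map_top, Submodule.range_subtype]
  have horth : ∀ j k, j ≠ k → B (v j) (v k) = 0 := fun j k hjk => hv hjk
  refine ⟨fun j => v j, hspan, horth, fun j hj => ?_⟩
  have : (v j : Z) = 0 := hT _ (v j).2 fun ζ hζ => by
    rw [← hspan] at hζ
    obtain ⟨c, rfl⟩ := (Submodule.mem_span_range_iff_exists_fun ℝ).1 hζ
    simp only [map_sum, map_smul, smul_eq_mul]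
    refine Finset.sum_eq_zero fun k _ => ?_
    by_cases hk : j = k
    · subst hk; rw [hj, mul_zero]
    · rw [horth j k hk, mul_zero]
  exact v.ne_zero j (Subtype.ext this)

/-! ### Perturbation of kernels of surjective systems of linear forms -/

theorem tendsto_clm_of_pointwise {W Z Y : Type*} [NormedAddCommGroup Z] [NormedSpace ℝ Z]
    [FiniteDimensional ℝ Z] [NormedAddCommGroup Y] [NormedSpace ℝ Y] {l : Filter W}
    {N : W → Z →L[ℝ] Y} {N₀ : Z →L[ℝ] Y} (h : ∀ ξ, Tendsto (fun w => N w ξ) l (𝓝 (N₀ ξ))) :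
    Tendsto N l (𝓝 N₀) := by
  let v := Module.finBasis ℝ Z
  obtain ⟨C, hC, hCb⟩ := v.exists_opNorm_le (F := Y)
  rw [tendsto_iff_norm_sub_tendsto_zero]
  have h1 : Tendsto (fun w => C * ∑ i, ‖(N w - N₀) (v i)‖) l (𝓝 0) := by
    have : Tendsto (fun w => C * ∑ i, ‖(N w - N₀) (v i)‖) l (𝓝 (C * ∑ i, (0 : ℝ))) :=
      (tendsto_finsetSum _ fun i _ => by
        simpa using tendsto_iff_norm_sub_tendsto_zero.1 (h (v i))).const_mul C
    simpa using this
  refine squeeze_zero (fun _ => norm_nonneg _) (fun w => ?_) h1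
  exact hCb (by positivity) fun i =>
    Finset.single_le_sum (f := fun i => ‖(N w - N₀) (v i)‖) (fun _ _ => norm_nonneg _)
      (Finset.mem_univ i)

theorem range_pi_eq_top {Z R : Type*} [AddCommGroup Z] [Module ℝ Z] [Fintype R]
    {a : R → Z →ₗ[ℝ] ℝ} (h : ∀ c : R → ℝ, (∀ ξ, ∑ r, c r * a r ξ = 0) → c = 0) :
    (LinearMap.pi a).range = ⊤ := by
  by_contra hne
  obtain ⟨φ, hφ, hle⟩ := Submodule.exists_le_ker_of_lt_top _ (lt_top_iff_ne_top.2 hne)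
  have key : ∀ x : R → ℝ, φ x = ∑ r, φ (fun j => if r = j then 1 else 0) * x r := fun x => by
    rw [LinearMap.pi_apply_eq_sum_univ φ x]
    exact Finset.sum_congr rfl fun r _ => by rw [smul_eq_mul, mul_comm]
  have h0 := h (fun r => φ (fun j => if r = j then 1 else 0)) fun ξ => by
    have := hle ⟨ξ, rfl⟩
    rw [LinearMap.mem_ker, key] at this
    exact this
  refine hφ (LinearMap.ext fun x => ?_)
  rw [key x]
  simp [fun r => congrFun h0 r]

/-- If a linearly independent finite system of linear forms `a₀` is perturbed, then the perturbed
system stays independent and its kernel has a spanning family close to a given family that is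
orthogonal for a form `B₀` nondegenerate on the kernel of `a₀`. -/
theorem exists_kernel_family {W Z R ι : Type*} [NormedAddCommGroup Z] [NormedSpace ℝ Z]
    [FiniteDimensional ℝ Z] [Fintype R] [Fintype ι] {l : Filter W}
    {a : W → R → Z →ₗ[ℝ] ℝ} {a₀ : R → Z →ₗ[ℝ] ℝ}
    (ha : ∀ r ξ, Tendsto (fun w => a w r ξ) l (𝓝 (a₀ r ξ)))
    (hind : ∀ c : R → ℝ, (∀ ξ, ∑ r, c r * a₀ r ξ = 0) → c = 0)
    (B₀ : Z →ₗ[ℝ] Z →ₗ[ℝ] ℝ) (b : ι → Z) (d : ι → ℝ)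
    (horth : ∀ j k, B₀ (b j) (b k) = if j = k then d j else 0) (hd : ∀ j, d j ≠ 0)
    (hb : ∀ j r, a₀ r (b j) = 0)
    (hker : ∀ ξ, (∀ r, a₀ r ξ = 0) → (∀ j, B₀ (b j) ξ = 0) → ξ = 0) :
    ∃ β : W → ι → Z, (∀ j, Tendsto (fun w => β w j) l (𝓝 (b j))) ∧
      ∀ᶠ w in l, (∀ c : R → ℝ, (∀ ξ, ∑ r, c r * a w r ξ = 0) → c = 0) ∧
        ∀ ξ, (∀ r, a w r ξ = 0) ↔ ξ ∈ Submodule.span ℝ (Set.range (β w)) := by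
  let M₀ : Z →ₗ[ℝ] (R → ℝ) × (ι → ℝ) := (LinearMap.pi a₀).prod (LinearMap.pi fun j => B₀ (b j))
  let M : W → Z →ₗ[ℝ] (R → ℝ) × (ι → ℝ) := fun w =>
    (LinearMap.pi (a w)).prod (LinearMap.pi fun j => B₀ (b j))
  have hinj : Function.Injective M₀ := by
    rw [← LinearMap.ker_eq_bot, LinearMap.ker_eq_bot']
    intro ξ hξ
    exact hker ξ (fun r => congrFun (congrArg Prod.fst hξ) r)
      (fun j => congrFun (congrArg Prod.snd hξ) j)
  have hcomb : ∀ c : ι → ℝ, M₀ (∑ j, c j • b j) = (0, fun j => d j * c j) := fun c => by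
    refine Prod.ext (funext fun r => ?_) (funext fun k => ?_)
    · show a₀ r (∑ j, c j • b j) = 0
      simp [hb]
    · show B₀ (b k) (∑ j, c j • b j) = d k * c k
      simp [horth, mul_comm]
  have hsurj : Function.Surjective M₀ := by
    rintro ⟨u, v⟩
    obtain ⟨ξ, hξ⟩ := LinearMap.range_eq_top.1 (range_pi_eq_top hind) u
    refine ⟨ξ + ∑ j, ((v j - B₀ (b j) ξ) / d j) • b j, ?_⟩
    rw [map_add, hcomb]
    refine Prod.ext ?_ (funext fun k => ?_)
    · simpa [M₀] using hξ
    · show B₀ (b k) ξ + d k * ((v k - B₀ (b k) ξ) / d k) = v k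
      have := hd k
      field_simp
      ring
  let e : Z ≃ₗ[ℝ] (R → ℝ) × (ι → ℝ) := LinearEquiv.ofBijective M₀ ⟨hinj, hsurj⟩
  let N : W → Z →L[ℝ] Z := fun w => LinearMap.toContinuousLinearMap (e.symm.toLinearMap ∘ₗ M w)
  have hN : ∀ w ξ, e (N w ξ) = M w ξ := fun w ξ => e.apply_symm_apply _
  have hNlim : Tendsto N l (𝓝 (1 : Z →L[ℝ] Z)) := by
    refine tendsto_clm_of_pointwise fun ξ => ?_
    have h1 : Tendsto (fun w => M w ξ) l (𝓝 (M₀ ξ)) :=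
      Tendsto.prodMk_nhds (tendsto_pi_nhds.2 fun r => ha r ξ) tendsto_const_nhds
    have h2 := (e.symm.toLinearMap.continuous_of_finiteDimensional.tendsto (M₀ ξ)).comp h1
    have h3 : e.symm.toLinearMap (M₀ ξ) = (1 : Z →L[ℝ] Z) ξ := e.symm_apply_apply ξ
    rw [h3] at h2
    exact h2
  have hunit : ∀ᶠ w in l, IsUnit (N w) :=
    hNlim.eventually (Units.isOpen.mem_nhds (isUnit_one (M := Z →L[ℝ] Z)))
  have hinvlim : Tendsto (fun w => Ring.inverse (N w)) l (𝓝 (1 : Z →L[ℝ] Z)) := by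
    have h := NormedRing.inverse_continuousAt (1 : (Z →L[ℝ] Z)ˣ)
    rw [ContinuousAt, Units.val_one, Ring.inverse_one] at h
    exact h.comp hNlim
  refine ⟨fun w j => Ring.inverse (N w) (b j), fun j => ?_, ?_⟩
  · exact ((ContinuousLinearMap.apply ℝ Z (b j)).continuous.tendsto _).comp hinvlim
  filter_upwards [hunit] with w hw
  have hNr : ∀ ξ, N w (Ring.inverse (N w) ξ) = ξ := fun ξ => by
    have := congrArg (fun φ : Z →L[ℝ] Z => φ ξ) (Ring.mul_inverse_cancel (N w) hw)
    simpa using this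
  have hNl : ∀ ξ, Ring.inverse (N w) (N w ξ) = ξ := fun ξ => by
    have := congrArg (fun φ : Z →L[ℝ] Z => φ ξ) (Ring.inverse_mul_cancel (N w) hw)
    simpa using this
  refine ⟨fun c hc => ?_, fun ξ => ⟨fun hξ => ?_, fun hξ r => ?_⟩⟩
  · obtain ⟨η, hη⟩ := hsurj (c, 0)
    have h1 : M w (Ring.inverse (N w) η) = (c, 0) := by
      rw [← hN, hNr]; exact hη
    have h2 := hc (Ring.inverse (N w) η)
    have h3 : ∀ r, a w r (Ring.inverse (N w) η) = c r := fun r =>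
      congrFun (congrArg Prod.fst h1) r
    simp only [h3] at h2
    funext r
    exact mul_self_eq_zero.1
      ((Finset.sum_eq_zero_iff_of_nonneg fun r _ => mul_self_nonneg (c r)).1 h2 r
        (Finset.mem_univ r))
  · have h1 : N w ξ = ∑ j, (B₀ (b j) ξ / d j) • b j := by
      apply e.injective
      rw [hN]
      refine Eq.trans ?_ (hcomb _).symm
      refine Prod.ext (funext hξ) (funext fun j => ?_)
      show B₀ (b j) ξ = d j * (B₀ (b j) ξ / d j)
      have := hd j
      field_simp
    rw [← hNl ξ, h1, map_sum]
    refine Submodule.sum_mem _ fun j _ => ?_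
    rw [map_smul]
    exact Submodule.smul_mem _ _ (Submodule.subset_span ⟨j, rfl⟩)
  · obtain ⟨c, rfl⟩ := (Submodule.mem_span_range_iff_exists_fun ℝ).1 hξ
    rw [map_sum]
    refine Finset.sum_eq_zero fun j _ => ?_
    have h1 : M w (Ring.inverse (N w) (b j)) = M₀ (b j) := by
      rw [← hN, hNr]; rfl
    have h2 : a w r (Ring.inverse (N w) (b j)) = a₀ r (b j) :=
      congrFun (congrArg Prod.fst h1) r
    rw [map_smul, h2, hb, smul_zero]

/-! ### First and second derivatives -/

/-- The second derivative as a bilinear map. -/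
abbrev sndDeriv (φ : Vec n → ℝ) (x : Vec n) : Vec n →L[ℝ] Vec n →L[ℝ] ℝ :=
  fderiv ℝ (fderiv ℝ φ) x

theorem fderiv_eq_dot_grad (φ : Vec n → ℝ) (x v : Vec n) :
    fderiv ℝ φ x v = dot (grad φ x) v := by
  conv_lhs => rw [pi_eq_sum_univ' v]
  simp only [map_sum, map_smul, smul_eq_mul, dot, grad]
  exact Finset.sum_congr rfl fun i _ => mul_comm _ _

theorem tendsto_clm_apply {W Y Z : Type*} [NormedAddCommGroup Y] [NormedSpace ℝ Y]
    [NormedAddCommGroup Z] [NormedSpace ℝ Z] {l : Filter W} {A : W → Y →L[ℝ] Z} {A₀ : Y →L[ℝ] Z}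
    {u : W → Y} {u₀ : Y} (hA : Tendsto A l (𝓝 A₀)) (hu : Tendsto u l (𝓝 u₀)) :
    Tendsto (fun w => A w (u w)) l (𝓝 (A₀ u₀)) :=
  (isBoundedBilinearMap_apply.continuous.tendsto (A₀, u₀)).comp (hA.prodMk_nhds hu)

section Smooth

variable {φ : Vec n → ℝ} (hφ : ContDiff ℝ 2 φ)

include hφ

theorem contDiff_fderiv_of_two : ContDiff ℝ 1 (fderiv ℝ φ) :=
  hφ.fderiv_right (by norm_num)

theorem contDiff_grad : ContDiff ℝ 1 (grad φ) :=
  contDiff_pi.2 fun _ => (contDiff_fderiv_of_two hφ).clm_apply contDiff_const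

theorem hasFDerivAt_fderiv (x : Vec n) : HasFDerivAt (fderiv ℝ φ) (sndDeriv φ x) x :=
  ((contDiff_fderiv_of_two hφ).differentiable one_ne_zero x).hasFDerivAt

theorem continuous_sndDeriv : Continuous (sndDeriv φ) :=
  (contDiff_fderiv_of_two hφ).continuous_fderiv one_ne_zero

theorem sndDeriv_symm (x u v : Vec n) : sndDeriv φ x u v = sndDeriv φ x v u :=
  (hφ.contDiffAt.isSymmSndFDerivAt (by simp)) u v

theorem hasDerivAt_grad_line (x u : Vec n) (i : Fin n) :
    HasDerivAt (fun s : ℝ => grad φ (x + s • u) i) (sndDeriv φ x u (Pi.single i 1)) 0 := by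
  have h1 : HasDerivAt (fun s : ℝ => x + s • u) u 0 := by
    simpa using ((hasDerivAt_id (0 : ℝ)).smul_const u).const_add x
  have h2 : HasFDerivAt (fderiv ℝ φ) (sndDeriv φ x) (x + (0 : ℝ) • u) := by
    simpa using hasFDerivAt_fderiv hφ x
  have h3 := h2.comp_hasDerivAt (0 : ℝ) h1
  have h4 := h3.clm_apply (hasDerivAt_const (0 : ℝ) (Pi.single i (1 : ℝ) : Vec n))
  exact h4.congr_deriv (by simp)

theorem hasDerivAt_line (x u : Vec n) :
    HasDerivAt (fun s : ℝ => φ (x + s • u)) (dot (grad φ x) u) 0 := by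
  have h1 : HasDerivAt (fun s : ℝ => x + s • u) u 0 := by
    simpa using ((hasDerivAt_id (0 : ℝ)).smul_const u).const_add x
  have h2 : HasFDerivAt φ (fderiv ℝ φ x) (x + (0 : ℝ) • u) := by
    simpa using (hφ.differentiable two_ne_zero x).hasFDerivAt
  rw [← fderiv_eq_dot_grad]
  exact h2.comp_hasDerivAt (0 : ℝ) h1

theorem tendsto_sndDeriv {W : Type*} {l : Filter W} {x u v : W → Vec n} {x₀ u₀ v₀ : Vec n}
    (hx : Tendsto x l (𝓝 x₀)) (hu : Tendsto u l (𝓝 u₀)) (hv : Tendsto v l (𝓝 v₀)) :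
    Tendsto (fun w => sndDeriv φ (x w) (u w) (v w)) l (𝓝 (sndDeriv φ x₀ u₀ v₀)) := by
  have h1 : Tendsto (fun w => sndDeriv φ (x w)) l (𝓝 (sndDeriv φ x₀)) :=
    ((continuous_sndDeriv hφ).tendsto x₀).comp hx
  exact tendsto_clm_apply (tendsto_clm_apply h1 hu) hv

/-- Hessian of a function of the first variable plus affine and diagonal bilinear terms. -/
theorem hess_eq {L : Vec n × Vec n → ℝ} (a : ℝ) (p r e : Vec n)
    (hL : ∀ z, L z = φ z.1 + (a + dot p z.1 + dot r z.2) - ∑ i, e i * (z.1 i * z.2 i))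
    (z ξ ζ : Vec n × Vec n) :
    hess L z ξ ζ = sndDeriv φ z.1 ζ.1 ξ.1
      - ∑ i, e i * (ξ.1 i * ζ.2 i + ζ.1 i * ξ.2 i) := by
  have hx : ∀ (i : Fin n) (w : Vec n × Vec n), HasFDerivAt (fun w : Vec n × Vec n => w.1 i)
      ((ContinuousLinearMap.proj i).comp (ContinuousLinearMap.fst ℝ (Vec n) (Vec n))) w :=
    fun i w => ((ContinuousLinearMap.proj (R := ℝ) (φ := fun _ : Fin n => ℝ) i).comp
      (ContinuousLinearMap.fst ℝ (Vec n) (Vec n))).hasFDerivAt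
  have hy : ∀ (i : Fin n) (w : Vec n × Vec n), HasFDerivAt (fun w : Vec n × Vec n => w.2 i)
      ((ContinuousLinearMap.proj i).comp (ContinuousLinearMap.snd ℝ (Vec n) (Vec n))) w :=
    fun i w => ((ContinuousLinearMap.proj (R := ℝ) (φ := fun _ : Fin n => ℝ) i).comp
      (ContinuousLinearMap.snd ℝ (Vec n) (Vec n))).hasFDerivAt
  have h1 : ∀ w : Vec n × Vec n, fderiv ℝ L w ξ = fderiv ℝ φ w.1 ξ.1 + (dot p ξ.1 + dot r ξ.2)
      - ∑ i, e i * (w.1 i * ξ.2 i + w.2 i * ξ.1 i) := by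
    intro w
    have hφ' : HasFDerivAt (fun w : Vec n × Vec n => φ w.1)
        ((fderiv ℝ φ w.1).comp (ContinuousLinearMap.fst ℝ (Vec n) (Vec n))) w :=
      (hφ.differentiable two_ne_zero w.1).hasFDerivAt.comp w hasFDerivAt_fst
    have hp : HasFDerivAt (fun w : Vec n × Vec n => dot p w.1) _ w :=
      HasFDerivAt.fun_sum fun i (_ : i ∈ Finset.univ) => (hx i w).const_mul (p i)
    have hr : HasFDerivAt (fun w : Vec n × Vec n => dot r w.2) _ w :=
      HasFDerivAt.fun_sum fun i (_ : i ∈ Finset.univ) => (hy i w).const_mul (r i)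
    have he : HasFDerivAt (fun w : Vec n × Vec n => ∑ i, e i * (w.1 i * w.2 i)) _ w :=
      HasFDerivAt.fun_sum fun i (_ : i ∈ Finset.univ) =>
        ((hx i w).mul (hy i w)).const_mul (e i)
    have hall := (hφ'.add ((hp.const_add a).add hr)).sub he
    rw [(hall.congr_of_eventuallyEq (f₁ := L) (Eventually.of_forall hL)).fderiv]
    simp [dot, _root_.sum_apply, mul_add]
  have h2 : HasFDerivAt (fun w : Vec n × Vec n => fderiv ℝ φ w.1 ξ.1)
      (((ContinuousLinearMap.apply ℝ ℝ ξ.1).comp (sndDeriv φ z.1)).comp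
        (ContinuousLinearMap.fst ℝ (Vec n) (Vec n))) z :=
    (((ContinuousLinearMap.apply ℝ ℝ ξ.1).hasFDerivAt (x := fderiv ℝ φ z.1)).comp z.1
      (hasFDerivAt_fderiv hφ z.1)).comp z hasFDerivAt_fst
  have h3 : HasFDerivAt
      (fun w : Vec n × Vec n => ∑ i, e i * (w.1 i * ξ.2 i + w.2 i * ξ.1 i)) _ z :=
    HasFDerivAt.fun_sum fun i (_ : i ∈ Finset.univ) =>
      (((hx i z).mul_const (ξ.2 i)).add ((hy i z).mul_const (ξ.1 i))).const_mul (e i)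
  have h4 := (h2.add_const (dot p ξ.1 + dot r ξ.2)).sub h3
  rw [hess, (h4.congr_of_eventuallyEq (f₁ := fun w => fderiv ℝ L w ξ)
    (Eventually.of_forall h1)).fderiv]
  simp only [_root_.sub_apply, ContinuousLinearMap.comp_apply,
    _root_.sum_apply, _root_.smul_apply, _root_.add_apply,
    ContinuousLinearMap.apply_apply, ContinuousLinearMap.coe_fst', ContinuousLinearMap.coe_snd',
    ContinuousLinearMap.proj_apply, smul_eq_mul]
  congr 1
  exact Finset.sum_congr rfl fun i _ => by ring

end Smooth

section Lagrangian

variable {K : Type*} [Fintype K] {f : Vec n → ℝ} {ψ : K → Vec n → ℝ}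

/-- Second derivative of the Lagrangian in the first variable. -/
def lagForm (f : Vec n → ℝ) (ψ : K → Vec n → ℝ) (x : Vec n) (κ : K → ℝ) :
    Vec n →L[ℝ] Vec n →L[ℝ] ℝ :=
  sndDeriv f x - ∑ k, κ k • sndDeriv (ψ k) x

theorem lagForm_apply (x : Vec n) (κ : K → ℝ) (u v : Vec n) :
    lagForm f ψ x κ u v = sndDeriv f x u v - ∑ k, κ k * sndDeriv (ψ k) x u v := by
  simp [lagForm, _root_.sum_apply]

variable (hf : ContDiff ℝ 2 f) (hψ : ∀ k, ContDiff ℝ 2 (ψ k))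

include hf hψ

theorem contDiff_lag (κ : K → ℝ) : ContDiff ℝ 2 fun x => f x - ∑ k, κ k * ψ k x :=
  hf.sub (ContDiff.sum fun k _ => contDiff_const.mul (hψ k))

theorem sndDeriv_lag (x : Vec n) (κ : K → ℝ) :
    sndDeriv (fun x => f x - ∑ k, κ k * ψ k x) x = lagForm f ψ x κ := by
  have h1 : fderiv ℝ (fun x => f x - ∑ k, κ k * ψ k x)
      = fun x => fderiv ℝ f x - ∑ k, κ k • fderiv ℝ (ψ k) x := funext fun x =>
    ((hf.differentiable two_ne_zero x).hasFDerivAt.sub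
      (HasFDerivAt.fun_sum fun k (_ : k ∈ Finset.univ) =>
        ((hψ k).differentiable two_ne_zero x).hasFDerivAt.const_mul (κ k))).fderiv
  rw [sndDeriv, h1]
  exact ((hasFDerivAt_fderiv hf x).sub
    (HasFDerivAt.fun_sum fun k (_ : k ∈ Finset.univ) =>
      (hasFDerivAt_fderiv (hψ k) x).const_smul (κ k))).fderiv

theorem lagForm_symm (x : Vec n) (κ : K → ℝ) (u v : Vec n) :
    lagForm f ψ x κ u v = lagForm f ψ x κ v u := by
  rw [lagForm_apply, lagForm_apply, sndDeriv_symm hf]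
  simp_rw [fun k => sndDeriv_symm (hψ k) x u v]

theorem tendsto_lagForm {W : Type*} {l : Filter W} {x u v : W → Vec n} {κ : W → K → ℝ}
    {x₀ u₀ v₀ : Vec n} {κ₀ : K → ℝ}
    (hx : Tendsto x l (𝓝 x₀)) (hκ : Tendsto κ l (𝓝 κ₀)) (hu : Tendsto u l (𝓝 u₀))
    (hv : Tendsto v l (𝓝 v₀)) :
    Tendsto (fun w => lagForm f ψ (x w) (κ w) (u w) (v w)) l
      (𝓝 (lagForm f ψ x₀ κ₀ u₀ v₀)) := by
  simp only [lagForm_apply]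
  exact (tendsto_sndDeriv hf hx hu hv).sub (tendsto_finsetSum _ fun k _ =>
    (tendsto_pi_nhds.1 hκ k).mul (tendsto_sndDeriv (hψ k) hx hu hv))

end Lagrangian

/-! ### The regularized stationarity system -/

/-- Behaviour of the pair `(x i, y i)` at a nondegenerate T-stationary point: `y i` at its upper
bound, strictly between its bounds, zero and staying zero, zero but moved to the hyperbola by
the regularization, or biactive. -/
inductive Kind
  | upper
  | free
  | zero
  | hyper
  | biact

/-- Local data at a nondegenerate T-stationary point. The multiplier of `x` is `σ`, the multiplier
of `y i` is `c i - μ`, and `s i` is the sign which `σ i` takes for the regularized problem. -/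
structure LocalData (n : ℕ) (K : Type*) [Fintype K] where
  f : Vec n → ℝ
  ψ : K → Vec n → ℝ
  c : Vec n
  x : Vec n
  y : Vec n
  σ : Vec n
  s : Vec n
  κ : K → ℝ
  μ : ℝ
  u : ℝ
  tot : ℝ
  kind : Fin n → Kind
  i₀ : Fin n
  contDiff_f : ContDiff ℝ 2 f
  contDiff_ψ : ∀ k, ContDiff ℝ 2 (ψ k)
  stat : ∀ i, grad f x i - ∑ k, κ k * grad (ψ k) x i - σ i = 0
  ψ_eq : ∀ k, ψ k x = 0
  sum_y : ∑ i, y i = tot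
  u_pos : 0 < u
  free_iff : ∀ i, kind i = .free ↔ i = i₀
  sign : ∀ i, s i = 1 ∨ s i = -1
  upper : ∀ i, kind i = .upper → x i = 0 ∧ y i = u ∧ 0 < s i * σ i ∧ c i < μ
  free : ∀ i, kind i = .free → x i = 0 ∧ 0 < y i ∧ y i < u ∧ 0 < s i * σ i ∧ c i = μ
  zero : ∀ i, kind i = .zero → x i ≠ 0 ∧ y i = 0 ∧ σ i = 0 ∧ μ < c i
  hyper : ∀ i, kind i = .hyper → s i * x i < 0 ∧ y i = 0 ∧ σ i = 0 ∧ c i < μ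
  biact : ∀ i, kind i = .biact → x i = 0 ∧ y i = 0 ∧ 0 < s i * σ i ∧ c i < μ
  licq : ∀ (lam : K → ℝ) (τ : Vec n), (∀ i, kind i = .zero ∨ kind i = .hyper → τ i = 0) →
    (∀ i, ∑ k, lam k * grad (ψ k) x i + τ i = 0) → lam = 0 ∧ τ = 0
  nondeg : ∀ v, (∀ k, dot (grad (ψ k) x) v = 0) →
    (∀ i, kind i ≠ .zero → kind i ≠ .hyper → v i = 0) →
    (∀ v', (∀ k, dot (grad (ψ k) x) v' = 0) →
      (∀ i, kind i ≠ .zero → kind i ≠ .hyper → v' i = 0) → lagForm f ψ x κ v v' = 0) → v = 0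

/-- Unknowns `(x, κ, y, σ, μ)` of the stationarity system. -/
abbrev State (n : ℕ) (K : Type*) := Vec n × (K → ℝ) × Vec n × Vec n × ℝ

/-- First defining equation of the pair `(x, y)`; `τ` is the square root of the regularization
parameter and `q` the limit quotient `y / τ` of a biactive pair. -/
def resid₁ (k : Kind) (s u x y τ q : ℝ) : ℝ :=
  match k with
  | .upper => y - u
  | .free => x * y + s * τ ^ 2
  | .zero => y
  | .hyper => x * y + s * τ ^ 2
  | .biact => x + s * τ * q⁻¹

/-- Second defining equation of the pair `(x, y)` with multipliers `(σ, ρ)`. -/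
def resid₂ (k : Kind) (s x y σ ρ τ q : ℝ) : ℝ :=
  match k with
  | .upper => x * y + s * τ ^ 2
  | .free => σ * x - ρ * y
  | .zero => σ
  | .hyper => σ * x - ρ * y
  | .biact => y - τ * q

namespace LocalData

variable {K : Type*} [Fintype K] (D : LocalData n K)

/-- The unperturbed solution of the stationarity system. -/
def base : State n K := (D.x, D.κ, D.y, D.σ, D.μ)

/-- The quotient `y i / √t` for a biactive pair. -/
def ratio (i : Fin n) (z : State n K) : ℝ :=
  Real.sqrt (D.s i * z.2.2.2.1 i / (z.2.2.2.2 - D.c i))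

/-- The regularized stationarity system with parameter `θ`, where `t = θ ^ 4`. -/
def system (w : State n K × ℝ) : State n K :=
  (fun i => grad D.f w.1.1 i - ∑ k, w.1.2.1 k * grad (D.ψ k) w.1.1 i - w.1.2.2.2.1 i,
   fun k => D.ψ k w.1.1,
   fun i => resid₁ (D.kind i) (D.s i) D.u (w.1.1 i) (w.1.2.2.1 i) (w.2 ^ 2) (D.ratio i w.1),
   fun i => resid₂ (D.kind i) (D.s i) (w.1.1 i) (w.1.2.2.1 i) (w.1.2.2.2.1 i)
     (D.c i - w.1.2.2.2.2) (w.2 ^ 2) (D.ratio i w.1),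
   ∑ i, w.1.2.2.1 i - D.tot)

theorem ratio_arg_pos {i : Fin n} (hi : D.kind i = .biact) :
    0 < D.s i * D.σ i / (D.μ - D.c i) :=
  div_pos (D.biact i hi).2.2.1 (sub_pos.2 (D.biact i hi).2.2.2)

theorem ratio_base_pos {i : Fin n} (hi : D.kind i = .biact) : 0 < D.ratio i D.base :=
  Real.sqrt_pos.2 (D.ratio_arg_pos hi)

theorem contDiffAt_ratio {i : Fin n} (hi : D.kind i = .biact) :
    ContDiffAt ℝ 1 (fun w : State n K × ℝ => D.ratio i w.1) (D.base, 0) := by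
  have h1 : ContDiffAt ℝ 1 (fun w : State n K × ℝ => D.s i * w.1.2.2.2.1 i / (w.1.2.2.2.2 - D.c i))
      (D.base, 0) := by
    refine ContDiffAt.div (by fun_prop) (by fun_prop) ?_
    exact (sub_pos.2 (D.biact i hi).2.2.2).ne'
  exact h1.sqrt (D.ratio_arg_pos hi).ne'

theorem contDiffAt_system : ContDiffAt ℝ 1 D.system (D.base, 0) := by
  have hg : ∀ {φ : Vec n → ℝ}, ContDiff ℝ 2 φ → ∀ i,
      ContDiffAt ℝ 1 (fun w : State n K × ℝ => grad φ w.1.1 i) (D.base, 0) := fun hφ i =>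
    ((contDiff_pi.1 (contDiff_grad hφ) i).comp
      (contDiff_fst.comp contDiff_fst : ContDiff ℝ 1 fun w : State n K × ℝ => w.1.1)).contDiffAt
  refine ContDiffAt.prodMk (contDiffAt_pi.2 fun i => ?_) (ContDiffAt.prodMk
    (contDiffAt_pi.2 fun k => ?_) (ContDiffAt.prodMk (contDiffAt_pi.2 fun i => ?_)
      (ContDiffAt.prodMk (contDiffAt_pi.2 fun i => ?_) ?_)))
  · refine ((hg D.contDiff_f i).sub (ContDiffAt.sum fun k _ => ?_)).sub (by fun_prop)
    exact ContDiffAt.mul (by fun_prop) (hg (D.contDiff_ψ k) i)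
  · exact (((D.contDiff_ψ k).of_le (by norm_num)).comp
      (contDiff_fst.comp contDiff_fst : ContDiff ℝ 1 fun w : State n K × ℝ => w.1.1)).contDiffAt
  · cases hi : D.kind i
    case biact =>
      have h := D.contDiffAt_ratio hi
      simp only [resid₁]
      refine ContDiffAt.add (by fun_prop) (ContDiffAt.mul (by fun_prop) (h.inv ?_))
      exact (D.ratio_base_pos hi).ne'
    all_goals simp only [resid₁]; fun_prop
  · cases hi : D.kind i
    case biact =>
      have h := D.contDiffAt_ratio hi
      simp only [resid₂]
      exact ContDiffAt.sub (by fun_prop) (ContDiffAt.mul (by fun_prop) h)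
    all_goals simp only [resid₂]; fun_prop
  · fun_prop

theorem system_base : D.system (D.base, 0) = 0 := by
  refine Prod.ext (funext fun i => D.stat i) (Prod.ext (funext fun k => D.ψ_eq k)
    (Prod.ext (funext fun i => ?_) (Prod.ext (funext fun i => ?_) ?_)))
  · show resid₁ (D.kind i) (D.s i) D.u (D.x i) (D.y i) (0 ^ 2) (D.ratio i D.base) = 0
    cases hi : D.kind i
    · simp [resid₁, D.upper i hi]
    · simp [resid₁, D.free i hi]
    · simp [resid₁, D.zero i hi]
    · simp [resid₁, D.hyper i hi]
    · simp [resid₁, D.biact i hi]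
  · show resid₂ (D.kind i) (D.s i) (D.x i) (D.y i) (D.σ i) (D.c i - D.μ) (0 ^ 2)
      (D.ratio i D.base) = 0
    cases hi : D.kind i
    · simp [resid₂, D.upper i hi]
    · simp [resid₂, D.free i hi]
    · simp [resid₂, D.zero i hi]
    · simp [resid₂, D.hyper i hi]
    · simp [resid₂, D.biact i hi]
  · show ∑ i, D.y i - D.tot = 0
    rw [D.sum_y, sub_self]

theorem hasDerivAt_add_mul (a b : ℝ) : HasDerivAt (fun r : ℝ => a + r * b) b 0 := by
  simpa using ((hasDerivAt_id (0 : ℝ)).mul_const b).const_add a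

theorem hasDerivAt_add_mul_mul (a b a' b' : ℝ) :
    HasDerivAt (fun r : ℝ => (a + r * b) * (a' + r * b')) (b * a' + a * b') 0 := by
  simpa using (hasDerivAt_add_mul a b).fun_mul (hasDerivAt_add_mul a' b')

theorem fderiv_system_injective (z : State n K)
    (hz : fderiv ℝ D.system (D.base, 0) (z, 0) = 0) : z = 0 := by
  obtain ⟨v, lam, dy, dσ, dμ⟩ := z
  set z : State n K := (v, lam, dy, dσ, dμ)
  have hline : HasDerivAt (fun r : ℝ => (D.base, (0 : ℝ)) + r • (z, (0 : ℝ))) (z, 0) 0 := by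
    simpa using ((hasDerivAt_id (0 : ℝ)).smul_const (z, (0 : ℝ))).const_add (D.base, (0 : ℝ))
  have hG : HasFDerivAt D.system (fderiv ℝ D.system (D.base, 0))
      ((D.base, (0 : ℝ)) + (0 : ℝ) • (z, (0 : ℝ))) := by
    simpa using (D.contDiffAt_system.differentiableAt one_ne_zero).hasFDerivAt
  have hd := hG.comp_hasDerivAt (0 : ℝ) hline
  rw [hz] at hd
  have hcomp : ∀ (ℓ : State n K →L[ℝ] ℝ), HasDerivAt
      (fun r : ℝ => ℓ (D.system ((D.base, (0 : ℝ)) + r • (z, (0 : ℝ))))) 0 0 := fun ℓ => by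
    have := (ℓ.hasFDerivAt (x := D.system ((D.base, (0 : ℝ)) + (0 : ℝ) • (z, (0 : ℝ))))).comp_hasDerivAt
      (0 : ℝ) hd
    exact this.congr_deriv (map_zero ℓ)
  have hstat : ∀ i, lagForm D.f D.ψ D.x D.κ v (Pi.single i 1)
      - ∑ k, lam k * grad (D.ψ k) D.x i - dσ i = 0 := fun i => by
    have h1 := hcomp ((ContinuousLinearMap.proj i).comp (ContinuousLinearMap.fst ℝ _ _))
    have h2 : HasDerivAt (fun r : ℝ => grad D.f (D.x + r • v) i
        - ∑ k, (D.κ k + r * lam k) * grad (D.ψ k) (D.x + r • v) i - (D.σ i + r * dσ i)) _ 0 :=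
      ((hasDerivAt_grad_line D.contDiff_f D.x v i).fun_sub
        (HasDerivAt.fun_sum fun k (_ : k ∈ Finset.univ) => (hasDerivAt_add_mul (D.κ k) (lam k)).fun_mul
          (hasDerivAt_grad_line (D.contDiff_ψ k) D.x v i))).fun_sub (hasDerivAt_add_mul _ _)
    have h3 := h2.unique (h1 : _)
    rw [lagForm_apply, ← h3]
    simp [Finset.sum_add_distrib]
    ring
  have hψ : ∀ k, dot (grad (D.ψ k) D.x) v = 0 := fun k =>
    (hasDerivAt_line (D.contDiff_ψ k) D.x v).unique
      (hcomp ((ContinuousLinearMap.proj k).comp ((ContinuousLinearMap.fst ℝ _ _).comp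
        (ContinuousLinearMap.snd ℝ _ _))))
  have hsum : ∑ i, dy i = 0 := by
    have h1 := hcomp ((ContinuousLinearMap.snd ℝ _ _).comp ((ContinuousLinearMap.snd ℝ _ _).comp
      ((ContinuousLinearMap.snd ℝ _ _).comp (ContinuousLinearMap.snd ℝ _ _))))
    have h2 : HasDerivAt (fun r : ℝ => ∑ i, (D.y i + r * dy i) - D.tot) _ 0 :=
      (HasDerivAt.fun_sum fun i (_ : i ∈ Finset.univ) =>
        hasDerivAt_add_mul (D.y i) (dy i)).sub_const D.tot
    exact h2.unique h1
  have hr₁ : ∀ i, HasDerivAt (fun r : ℝ => resid₁ (D.kind i) (D.s i) D.u (D.x i + r * v i)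
      (D.y i + r * dy i) ((0 + r * 0) ^ 2) (D.ratio i (D.base + r • z))) 0 0 := fun i =>
    hcomp ((ContinuousLinearMap.proj i).comp ((ContinuousLinearMap.fst ℝ _ _).comp
      ((ContinuousLinearMap.snd ℝ _ _).comp (ContinuousLinearMap.snd ℝ _ _))))
  have hr₂ : ∀ i, HasDerivAt (fun r : ℝ => resid₂ (D.kind i) (D.s i) (D.x i + r * v i)
      (D.y i + r * dy i) (D.σ i + r * dσ i) (D.c i - (D.μ + r * dμ)) ((0 + r * 0) ^ 2)
      (D.ratio i (D.base + r • z))) 0 0 := fun i =>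
    hcomp ((ContinuousLinearMap.proj i).comp ((ContinuousLinearMap.fst ℝ _ _).comp
      ((ContinuousLinearMap.snd ℝ _ _).comp ((ContinuousLinearMap.snd ℝ _ _).comp
        (ContinuousLinearMap.snd ℝ _ _)))))
  have hρ : ∀ i, HasDerivAt (fun r : ℝ => (D.σ i + r * dσ i) * (D.x i + r * v i)
      - (D.c i - (D.μ + r * dμ)) * (D.y i + r * dy i))
      (dσ i * D.x i + D.σ i * v i - (- dμ * D.y i + (D.c i - D.μ) * dy i)) 0 := fun i => by
    have := (hasDerivAt_add_mul_mul (D.σ i) (dσ i) (D.x i) (v i)).fun_sub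
      (((hasDerivAt_add_mul D.μ dμ).const_sub (D.c i)).fun_mul (hasDerivAt_add_mul (D.y i) (dy i)))
    simpa using this
  have hv : ∀ i, D.kind i ≠ .zero → D.kind i ≠ .hyper → v i = 0 := fun i h1 h2 => by
    have e₁ := hr₁ i
    have e₂ := hr₂ i
    cases hi : D.kind i
    case zero => exact absurd hi h1
    case hyper => exact absurd hi h2
    case upper =>
      simp only [hi, resid₂, mul_zero, add_zero, ne_eq, OfNat.ofNat_ne_zero, not_false_eq_true,
        zero_pow] at e₂
      have := (hasDerivAt_add_mul_mul _ _ _ _).unique e₂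
      rw [(D.upper i hi).1, (D.upper i hi).2.1] at this
      simpa [D.u_pos.ne'] using this
    case free =>
      simp only [hi, resid₁, mul_zero, add_zero, ne_eq, OfNat.ofNat_ne_zero, not_false_eq_true,
        zero_pow] at e₁
      have := (hasDerivAt_add_mul_mul _ _ _ _).unique e₁
      rw [(D.free i hi).1] at this
      simpa [(D.free i hi).2.1.ne'] using this
    case biact =>
      simp only [hi, resid₁, mul_zero, zero_mul, add_zero, ne_eq, OfNat.ofNat_ne_zero,
        not_false_eq_true, zero_pow] at e₁
      exact (hasDerivAt_add_mul _ _).unique e₁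
  have hy' : ∀ i, D.kind i ≠ .free → dy i = 0 := fun i h1 => by
    have e₁ := hr₁ i
    have e₂ := hr₂ i
    cases hi : D.kind i
    case free => exact absurd hi h1
    case upper =>
      simp only [hi, resid₁] at e₁
      exact ((hasDerivAt_add_mul _ _).sub_const D.u).unique e₁
    case zero =>
      simp only [hi, resid₁] at e₁
      exact (hasDerivAt_add_mul _ _).unique e₁
    case hyper =>
      simp only [hi, resid₁, mul_zero, add_zero, ne_eq, OfNat.ofNat_ne_zero, not_false_eq_true,
        zero_pow] at e₁
      have := (hasDerivAt_add_mul_mul _ _ _ _).unique e₁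
      rw [(D.hyper i hi).2.1] at this
      have hx : D.x i ≠ 0 := fun h => by simpa [h] using (D.hyper i hi).1
      simpa [hx] using this
    case biact =>
      simp only [hi, resid₂, mul_zero, zero_mul, add_zero, sub_zero, ne_eq, OfNat.ofNat_ne_zero,
        not_false_eq_true, zero_pow] at e₂
      exact (hasDerivAt_add_mul _ _).unique e₂
  have hy : ∀ i, dy i = 0 := fun i => by
    by_cases hi : D.kind i = .free
    · rw [← hsum]
      refine (Finset.sum_eq_single_of_mem i (Finset.mem_univ i) fun j _ hj => hy' j fun h => ?_).symm
      exact hj (((D.free_iff j).1 h).trans ((D.free_iff i).1 hi).symm)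
    · exact hy' i hi
  have hσ : ∀ i, D.kind i = .zero ∨ D.kind i = .hyper → dσ i = 0 := by
    rintro i (hi | hi)
    · have e₂ := hr₂ i
      simp only [hi, resid₂] at e₂
      exact (hasDerivAt_add_mul _ _).unique e₂
    · have e₂ := hr₂ i
      simp only [hi, resid₂] at e₂
      have := (hρ i).unique e₂
      have hx : D.x i ≠ 0 := fun h => by simpa [h] using (D.hyper i hi).1
      simpa [hy i, (D.hyper i hi).2.1, (D.hyper i hi).2.2.1, hx] using this
  have hμ : dμ = 0 := by
    have hi := (D.free_iff D.i₀).2 rfl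
    have e₂ := hr₂ D.i₀
    simp only [hi, resid₂] at e₂
    have := (hρ D.i₀).unique e₂
    rw [hv _ (by simp [hi]) (by simp [hi]), hy, (D.free _ hi).1] at this
    simpa [(D.free _ hi).2.1.ne'] using this
  have hv0 : v = 0 := by
    refine D.nondeg v hψ hv fun v' h1 h2 => ?_
    have h3 : ∑ i, v' i * (lagForm D.f D.ψ D.x D.κ v (Pi.single i 1)
        - ∑ k, lam k * grad (D.ψ k) D.x i - dσ i) = 0 :=
      Finset.sum_eq_zero fun i _ => by rw [hstat, mul_zero]
    have h4 : ∑ i, v' i * ∑ k, lam k * grad (D.ψ k) D.x i = 0 := by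
      simp only [Finset.mul_sum]
      rw [Finset.sum_comm]
      refine Finset.sum_eq_zero fun k _ => ?_
      have := congrArg (lam k * ·) (h1 k)
      simp only [dot, mul_zero, Finset.mul_sum] at this
      rw [← this]
      exact Finset.sum_congr rfl fun i _ => by ring
    have h5 : ∑ i, v' i * dσ i = 0 := Finset.sum_eq_zero fun i _ => by
      by_cases hi : D.kind i = .zero ∨ D.kind i = .hyper
      · rw [hσ i hi, mul_zero]
      · push Not at hi
        rw [h2 i hi.1 hi.2, zero_mul]
    simp only [mul_sub, Finset.sum_sub_distrib, h4, h5, sub_zero] at h3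
    conv_lhs => rw [pi_eq_sum_univ' v']
    simpa only [map_sum, map_smul, smul_eq_mul] using h3
  have hlin := D.licq lam dσ hσ fun i => by
    have := hstat i
    rw [hv0, map_zero, _root_.zero_apply] at this
    linarith
  show (v, lam, dy, dσ, dμ) = 0
  rw [hv0, hlin.1, hlin.2, hμ, show dy = 0 from funext hy]
  rfl

/-- Properties holding near the base point for solutions of the system with positive parameter
hold for some solution for every small positive parameter. -/
theorem eventually_exists_solution {p : State n K × ℝ → Prop}
    (hp : ∀ᶠ w in 𝓝 (D.base, (0 : ℝ)) ⊓ 𝓟 {w | D.system w = 0 ∧ 0 < w.2}, p w) :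
    ∀ᶠ θ in 𝓝[>] (0 : ℝ), ∃ z : State n K, p (z, θ) := by
  have hF : ContDiffAt ℝ 1 (fun w : State n K × ℝ => (D.system w, w.2)) (D.base, 0) :=
    D.contDiffAt_system.prodMk contDiffAt_snd
  have hF' := hF.hasStrictFDerivAt one_ne_zero
  have hF'' : fderiv ℝ (fun w : State n K × ℝ => (D.system w, w.2)) (D.base, 0)
      = (fderiv ℝ D.system (D.base, 0)).prod (ContinuousLinearMap.snd ℝ _ _) :=
    ((D.contDiffAt_system.differentiableAt one_ne_zero).hasFDerivAt.prodMk hasFDerivAt_snd).fderiv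
  have hinj : Function.Injective
      (fderiv ℝ (fun w : State n K × ℝ => (D.system w, w.2)) (D.base, 0)).toLinearMap := by
    rw [← LinearMap.ker_eq_bot, LinearMap.ker_eq_bot']
    rintro ⟨z, r⟩ h
    rw [hF''] at h
    have hr : r = 0 := congrArg Prod.snd h
    subst hr
    rw [D.fderiv_system_injective z (congrArg Prod.fst h)]
    rfl
  have hmap := hF'.map_nhds_eq_of_surj
    (LinearMap.range_eq_top.2 (LinearMap.injective_iff_surjective.1 hinj))
  rw [eventually_inf_principal] at hp
  have h1 := Filter.image_mem_map (m := fun w : State n K × ℝ => (D.system w, w.2)) hp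
  rw [hmap, D.system_base] at h1
  have h2 : Tendsto (fun θ : ℝ => ((0 : State n K), θ)) (𝓝[>] 0) (𝓝 (0, 0)) :=
    tendsto_const_nhds.prodMk_nhds (tendsto_id.mono_left nhdsWithin_le_nhds)
  filter_upwards [h2.eventually h1, self_mem_nhdsWithin] with θ hθ hpos
  obtain ⟨⟨z, θ'⟩, hw, he⟩ := hθ
  have hθ' : θ' = θ := congrArg Prod.snd he
  subst hθ'
  exact ⟨z, hw ⟨congrArg Prod.fst he, hpos⟩⟩

end LocalData

/-! ### Properties of the regularized solutions -/

namespace LocalData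

variable {K : Type*} [Fintype K] (D : LocalData n K)

/-- Solutions of the regularized system with positive parameter near the base point. -/
def near : Filter (State n K × ℝ) :=
  𝓝 (D.base, (0 : ℝ)) ⊓ 𝓟 {w | D.system w = 0 ∧ 0 < w.2}

/-- The sign conditions and equations satisfied by a solution close to the base point. -/
structure IsRegular (w : State n K × ℝ) : Prop where
  pos : 0 < w.2
  stat : ∀ i, grad D.f w.1.1 i - ∑ k, w.1.2.1 k * grad (D.ψ k) w.1.1 i - w.1.2.2.2.1 i = 0
  ψ_eq : ∀ k, D.ψ k w.1.1 = 0
  sum_y : ∑ i, w.1.2.2.1 i = D.tot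
  y_pos : ∀ i, D.kind i ≠ .zero → 0 < w.1.2.2.1 i
  mul_eq : ∀ i, D.kind i ≠ .zero → w.1.1 i * w.1.2.2.1 i = -(D.s i * w.2 ^ 4)
  sign_pos : ∀ i, D.kind i ≠ .zero → 0 < D.s i * w.1.2.2.2.1 i
  mult_eq : ∀ i, D.kind i ≠ .zero → D.kind i ≠ .upper →
    w.1.2.2.2.1 i * w.1.1 i = (D.c i - w.1.2.2.2.2) * w.1.2.2.1 i
  upper : ∀ i, D.kind i = .upper → w.1.2.2.1 i = D.u ∧
    D.c i - w.1.2.2.2.2 - w.1.1 i * w.1.2.2.2.1 i / w.1.2.2.1 i < 0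
  zero : ∀ i, D.kind i = .zero → w.1.2.2.1 i = 0 ∧ w.1.2.2.2.1 i = 0 ∧ w.1.2.2.2.2 < D.c i
  y_lt : ∀ i, D.kind i ≠ .upper → w.1.2.2.1 i < D.u
  hyper : ∀ i, D.kind i = .hyper → w.1.1 i ≠ 0
  biact : ∀ i, D.kind i = .biact → 0 < D.ratio i w.1 ∧
    w.1.2.2.1 i = w.2 ^ 2 * D.ratio i w.1 ∧ w.1.1 i = -(D.s i * w.2 ^ 2 * (D.ratio i w.1)⁻¹)

theorem tendsto_near {Y : Type*} [TopologicalSpace Y] {p : State n K × ℝ → Y}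
    (hp : ContinuousAt p (D.base, 0)) : Tendsto p D.near (𝓝 (p (D.base, 0))) :=
  hp.tendsto.mono_left inf_le_left

theorem eventually_near_system : ∀ᶠ w in D.near, D.system w = 0 ∧ 0 < w.2 :=
  eventually_inf_principal.2 (Eventually.of_forall fun _ h => h)

theorem eventually_isRegular : ∀ᶠ w in D.near, D.IsRegular w := by
  have hlt : ∀ {p q : State n K × ℝ → ℝ}, ContinuousAt p (D.base, 0) →
      ContinuousAt q (D.base, 0) → p (D.base, 0) < q (D.base, 0) → ∀ᶠ w in D.near, p w < q w :=
    fun hp hq h => (D.tendsto_near hp).eventually_lt (D.tendsto_near hq) h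
  have hsign : ∀ᶠ w in D.near, ∀ i, (D.kind i ≠ .zero → D.kind i ≠ .hyper →
      0 < D.s i * w.1.2.2.2.1 i) ∧ (D.kind i = .hyper → D.s i * w.1.1 i < 0) := by
    refine eventually_all.2 fun i => Eventually.and ?_ ?_
    · by_cases h : D.kind i ≠ .zero ∧ D.kind i ≠ .hyper
      · have h0 : 0 < D.s i * D.σ i := by
          cases hi : D.kind i
          · exact (D.upper i hi).2.2.1
          · exact (D.free i hi).2.2.2.1
          · exact absurd hi h.1
          · exact absurd hi h.2
          · exact (D.biact i hi).2.2.1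
        filter_upwards [hlt (p := fun _ => 0) (q := fun w => D.s i * w.1.2.2.2.1 i)
          (by fun_prop) (by fun_prop) h0] with w hw _ _ using hw
      · exact Eventually.of_forall fun w h1 h2 => absurd ⟨h1, h2⟩ h
    · by_cases h : D.kind i = .hyper
      · filter_upwards [hlt (p := fun w => D.s i * w.1.1 i) (q := fun _ => 0)
          (by fun_prop) (by fun_prop) (D.hyper i h).1] with w hw _ using hw
      · exact Eventually.of_forall fun w h1 => absurd h1 h
  have hc : ∀ᶠ w in D.near, ∀ i, (D.kind i = .zero → w.1.2.2.2.2 < D.c i) ∧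
      (D.kind i = .hyper ∨ D.kind i = .biact → D.c i < w.1.2.2.2.2) := by
    refine eventually_all.2 fun i => Eventually.and ?_ ?_
    · by_cases h : D.kind i = .zero
      · filter_upwards [hlt (p := fun w => w.1.2.2.2.2) (q := fun _ => D.c i)
          (by fun_prop) (by fun_prop) (D.zero i h).2.2.2] with w hw _ using hw
      · exact Eventually.of_forall fun w h1 => absurd h1 h
    · by_cases h : D.kind i = .hyper ∨ D.kind i = .biact
      · have h0 : D.c i < D.μ := h.elim (fun h => (D.hyper i h).2.2.2) fun h => (D.biact i h).2.2.2
        filter_upwards [hlt (p := fun _ => D.c i) (q := fun w => w.1.2.2.2.2)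
          (by fun_prop) (by fun_prop) h0] with w hw _ using hw
      · exact Eventually.of_forall fun w h1 => absurd h1 h
  have hup : ∀ᶠ w in D.near, ∀ i, D.kind i = .upper →
      D.c i - w.1.2.2.2.2 - w.1.1 i * w.1.2.2.2.1 i / w.1.2.2.1 i < 0 := by
    refine eventually_all.2 fun i => ?_
    by_cases h : D.kind i = .upper
    · have hy : D.y i ≠ 0 := by
        rw [(D.upper i h).2.1]
        exact D.u_pos.ne'
      have h0 : D.c i - D.μ - D.x i * D.σ i / D.y i < 0 := by
        rw [(D.upper i h).1, zero_mul, zero_div, sub_zero]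
        exact sub_neg.2 (D.upper i h).2.2.2
      have hcont : ContinuousAt (fun w : State n K × ℝ =>
          w.1.1 i * w.1.2.2.2.1 i / w.1.2.2.1 i) (D.base, 0) :=
        ContinuousAt.div (by fun_prop) (by fun_prop) hy
      filter_upwards [hlt (p := fun w => D.c i - w.1.2.2.2.2 - w.1.1 i * w.1.2.2.2.1 i / w.1.2.2.1 i)
        (q := fun _ => 0) (ContinuousAt.sub (by fun_prop) hcont) (by fun_prop) h0] with w hw _ using hw
    · exact Eventually.of_forall fun w h1 => absurd h1 h
  have hfree : ∀ᶠ w in D.near, ∀ i, D.kind i = .free → 0 < w.1.2.2.1 i := by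
    refine eventually_all.2 fun i => ?_
    by_cases h : D.kind i = .free
    · filter_upwards [hlt (p := fun _ => 0) (q := fun w => w.1.2.2.1 i)
          (by fun_prop) (by fun_prop) (D.free i h).2.1] with w hw _ using hw
    · exact Eventually.of_forall fun w h1 => absurd h1 h
  have hy : ∀ᶠ w in D.near, ∀ i, D.kind i ≠ .upper → w.1.2.2.1 i < D.u := by
    refine eventually_all.2 fun i => ?_
    by_cases h : D.kind i ≠ .upper
    · have h0 : D.y i < D.u := by
        cases hi : D.kind i
        · exact absurd hi h
        · exact (D.free i hi).2.2.1
        · rw [(D.zero i hi).2.1]; exact D.u_pos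
        · rw [(D.hyper i hi).2.1]; exact D.u_pos
        · rw [(D.biact i hi).2.1]; exact D.u_pos
      filter_upwards [hlt (p := fun w => w.1.2.2.1 i) (q := fun _ => D.u)
          (by fun_prop) (by fun_prop) h0] with w hw _ using hw
    · exact Eventually.of_forall fun w h1 => absurd h1 h
  filter_upwards [hsign, hc, hup, hfree, hy, D.eventually_near_system] with w hsign hc hup hfree hy hw
  obtain ⟨hsys, hpos⟩ := hw
  have h1 : ∀ i, resid₁ (D.kind i) (D.s i) D.u (w.1.1 i) (w.1.2.2.1 i) (w.2 ^ 2)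
      (D.ratio i w.1) = 0 := fun i => congrFun (congrArg (fun z : State n K => z.2.2.1) hsys) i
  have h2 : ∀ i, resid₂ (D.kind i) (D.s i) (w.1.1 i) (w.1.2.2.1 i) (w.1.2.2.2.1 i)
      (D.c i - w.1.2.2.2.2) (w.2 ^ 2) (D.ratio i w.1) = 0 := fun i =>
    congrFun (congrArg (fun z : State n K => z.2.2.2.1) hsys) i
  have h3 : ∑ i, w.1.2.2.1 i - D.tot = 0 := congrArg (fun z : State n K => z.2.2.2.2) hsys
  have harg : ∀ i, D.kind i = .biact → 0 < D.s i * w.1.2.2.2.1 i / (w.1.2.2.2.2 - D.c i) :=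
    fun i hi => div_pos ((hsign i).1 (by simp [hi]) (by simp [hi])) (sub_pos.2 ((hc i).2 (.inr hi)))
  have hq : ∀ i, D.kind i = .biact → 0 < D.ratio i w.1 := fun i hi => Real.sqrt_pos.2 (harg i hi)
  have hxhyper : ∀ i, D.kind i = .hyper → w.1.1 i ≠ 0 := fun i hi h => by
    simpa [h] using (hsign i).2 hi
  have hyp : ∀ i, D.kind i ≠ .zero → 0 < w.1.2.2.1 i := fun i hi => by
    have h1 := h1 i
    have h2 := h2 i
    cases hk : D.kind i <;> simp only [hk, resid₁, resid₂] at h1 h2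
    case upper => rw [sub_eq_zero.1 h1]; exact D.u_pos
    case free => exact hfree i hk
    case zero => exact absurd hk hi
    case hyper =>
      have h := (hsign i).2 hk
      have hθ : 0 < (w.2 ^ 2) ^ 2 := by positivity
      rcases D.sign i with hs | hs <;> rw [hs] at h h1 <;> by_contra hle <;> nlinarith
    case biact =>
      rw [sub_eq_zero.1 h2]
      exact mul_pos (by positivity) (hq i hk)
  have hmult : ∀ i, D.kind i ≠ .zero → D.kind i ≠ .upper →
      w.1.2.2.2.1 i * w.1.1 i = (D.c i - w.1.2.2.2.2) * w.1.2.2.1 i := fun i hi hi' => by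
    have h1 := h1 i
    have h2 := h2 i
    cases hk : D.kind i <;> simp only [hk, resid₁, resid₂] at h1 h2
    case upper => exact absurd hk hi'
    case free => exact sub_eq_zero.1 h2
    case zero => exact absurd hk hi
    case hyper => exact sub_eq_zero.1 h2
    case biact =>
      have hsq : D.ratio i w.1 ^ 2 = D.s i * w.1.2.2.2.1 i / (w.1.2.2.2.2 - D.c i) :=
        Real.sq_sqrt (harg i hk).le
      have hne : w.1.2.2.2.2 - D.c i ≠ 0 := (sub_pos.2 ((hc i).2 (.inr hk))).ne'
      rw [eq_div_iff hne] at hsq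
      have hqne := (hq i hk).ne'
      rw [sub_eq_zero.1 h2, eq_neg_of_add_eq_zero_left h1]
      field_simp
      linear_combination hsq
  refine ⟨hpos, fun i => congrFun (congrArg (fun z : State n K => z.1) hsys) i,
    fun k => congrFun (congrArg (fun z : State n K => z.2.1) hsys) k, sub_eq_zero.1 h3, hyp,
    fun i hi => ?_, fun i hi => ?_, hmult, fun i hi => ⟨?_, hup i hi⟩,
    fun i hi => ⟨?_, ?_, (hc i).1 hi⟩, hy, hxhyper, fun i hi => ⟨hq i hi, ?_, ?_⟩⟩
  · have h1 := h1 i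
    have h2 := h2 i
    cases hk : D.kind i <;> simp only [hk, resid₁, resid₂] at h1 h2
    case upper => linear_combination h2
    case free => linear_combination h1
    case zero => exact absurd hk hi
    case hyper => linear_combination h1
    case biact =>
      have hqne := (hq i hk).ne'
      rw [sub_eq_zero.1 h2, eq_neg_of_add_eq_zero_left h1]
      field_simp
  · by_cases hk : D.kind i = .hyper
    · have e := hmult i hi (by simp [hk])
      have hx := (hsign i).2 hk
      have hyi := hyp i hi
      have hc' := (hc i).2 (.inl hk)
      have hs2 : D.s i * D.s i = 1 := by rcases D.sign i with hs | hs <;> rw [hs] <;> norm_num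
      have h4 : (D.s i * w.1.2.2.2.1 i) * (D.s i * w.1.1 i) < 0 := by
        have : (D.s i * w.1.2.2.2.1 i) * (D.s i * w.1.1 i)
            = (D.c i - w.1.2.2.2.2) * w.1.2.2.1 i := by
          rw [← e]; linear_combination (w.1.2.2.2.1 i * w.1.1 i) * hs2
        rw [this]
        exact mul_neg_of_neg_of_pos (sub_neg.2 hc') hyi
      by_contra hle
      nlinarith
    · exact (hsign i).1 hi hk
  · have := h1 i
    simp only [hi, resid₁] at this
    exact sub_eq_zero.1 this
  · have := h1 i
    simpa only [hi, resid₁] using this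
  · have := h2 i
    simpa only [hi, resid₂] using this
  · have := h2 i
    simp only [hi, resid₂] at this
    exact sub_eq_zero.1 this
  · have := h1 i
    simp only [hi, resid₁] at this
    exact eq_neg_of_add_eq_zero_left this

end LocalData

/-! ### The rescaled second-order data -/

/-- The functional `ξ ↦ ⟨p, ξ.1⟩ + ⟨r, ξ.2⟩`. -/
def dotL (p r : Vec n) : Vec n × Vec n →ₗ[ℝ] ℝ where
  toFun ξ := dot p ξ.1 + dot r ξ.2
  map_add' ξ ζ := by
    simp only [dot, Prod.fst_add, Prod.snd_add, Pi.add_apply, mul_add, Finset.sum_add_distrib]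
    ring
  map_smul' a ξ := by
    simp only [dot, Prod.smul_fst, Prod.smul_snd, Pi.smul_apply, smul_eq_mul, RingHom.id_apply,
      mul_add, Finset.mul_sum, mul_left_comm]

theorem dotL_apply (p r : Vec n) (ξ : Vec n × Vec n) : dotL p r ξ = dot p ξ.1 + dot r ξ.2 := rfl

theorem dot_single (i : Fin n) (a : ℝ) (v : Vec n) : dot (Pi.single i a) v = a * v i := by
  rw [dot, Finset.sum_eq_single i]
  · simp
  · intro j _ hj
    simp [hj]
  · simp

theorem dot_single_right (i : Fin n) (a : ℝ) (v : Vec n) : dot v (Pi.single i a) = v i * a := by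
  rw [dot, Finset.sum_eq_single i]
  · simp
  · intro j _ hj
    simp [hj]
  · simp

theorem dot_zero_left (v : Vec n) : dot 0 v = 0 := by simp [dot]

theorem dot_zero_right (v : Vec n) : dot v 0 = 0 := by simp [dot]

theorem dot_mul (p s v : Vec n) : dot (p * s) v = dot p (s * v) := by
  simp only [dot, Pi.mul_apply, mul_assoc]

/-- Componentwise scaling of both components. -/
def scaleL (s : Vec n) : Vec n × Vec n →ₗ[ℝ] Vec n × Vec n where
  toFun ξ := (s * ξ.1, s * ξ.2)
  map_add' ξ ζ := by simp [mul_add]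
  map_smul' a ξ := by simp

/-- The Hessian of a Lagrangian with Hessian `A` in `x` and bilinear terms `-e i * x i * y i`, in
directions whose first component is scaled by `s`. -/
def formL (A : Vec n →L[ℝ] Vec n →L[ℝ] ℝ) (s e : Vec n) :
    (Vec n × Vec n) →ₗ[ℝ] (Vec n × Vec n) →ₗ[ℝ] ℝ :=
  LinearMap.mk₂ ℝ (fun ξ ζ => A (s * ξ.1) (s * ζ.1)
      - ∑ i, e i * (ξ.1 i * ζ.2 i + ζ.1 i * ξ.2 i))
    (fun ξ ξ' ζ => by
      simp only [Prod.fst_add, Prod.snd_add, Pi.add_apply, mul_add, add_mul, map_add,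
        _root_.add_apply, Finset.sum_add_distrib]
      ring)
    (fun a ξ ζ => by
      simp only [Prod.smul_fst, Prod.smul_snd, Pi.smul_apply, mul_smul_comm, map_smul,
        _root_.smul_apply, smul_eq_mul, mul_sub, Finset.mul_sum]
      exact congrArg _ (Finset.sum_congr rfl fun i _ => by ring))
    (fun ξ ζ ζ' => by
      simp only [Prod.fst_add, Prod.snd_add, Pi.add_apply, mul_add, add_mul, map_add,
        Finset.sum_add_distrib]
      ring)
    (fun a ξ ζ => by
      simp only [Prod.smul_fst, Prod.smul_snd, Pi.smul_apply, mul_smul_comm, map_smul,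
        smul_eq_mul, mul_sub, Finset.mul_sum]
      exact congrArg _ (Finset.sum_congr rfl fun i _ => by ring))

theorem formL_apply (A : Vec n →L[ℝ] Vec n →L[ℝ] ℝ) (s e : Vec n) (ξ ζ : Vec n × Vec n) :
    formL A s e ξ ζ = A (s * ξ.1) (s * ζ.1) - ∑ i, e i * (ξ.1 i * ζ.2 i + ζ.1 i * ξ.2 i) := rfl

theorem formL_scaleL (A : Vec n →L[ℝ] Vec n →L[ℝ] ℝ) (s e : Vec n) (ξ ζ : Vec n × Vec n) :
    formL A 1 e (scaleL s ξ) (scaleL s ζ) = formL A s (e * s ^ 2) ξ ζ := by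
  simp only [formL_apply, scaleL, LinearMap.coe_mk, AddHom.coe_mk, one_mul, Pi.mul_apply,
    Pi.pow_apply]
  exact congrArg _ (Finset.sum_congr rfl fun i _ => by ring)

namespace LocalData

variable {K : Type*} [Fintype K] (D : LocalData n K)

/-- Scaling of the directions: biactive pairs are scaled by `θ`. -/
def scale (w : State n K × ℝ) : Vec n := fun i => if D.kind i = .biact then w.2 else 1

/-- The rescaled bilinear coefficients of the Hessian. -/
def cross (w : State n K × ℝ) : Vec n := fun i =>
  match D.kind i with
  | .upper => w.1.2.2.2.1 i / w.1.2.2.1 i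
  | .free => w.1.2.2.2.1 i / w.1.2.2.1 i
  | .zero => 0
  | .hyper => (D.c i - w.1.2.2.2.2) / w.1.1 i
  | .biact => w.1.2.2.2.1 i / D.ratio i w.1

/-- The first rescaled constraint of the pair `i`. -/
def coef (w : State n K × ℝ) (i : Fin n) : ℝ × ℝ :=
  match D.kind i with
  | .upper => (0, 1)
  | .free => (w.1.2.2.1 i, w.1.1 i)
  | .zero => (0, 1)
  | .hyper => (w.1.2.2.1 i, w.1.1 i)
  | .biact => (D.ratio i w.1, -(D.s i * (D.ratio i w.1)⁻¹))

/-- Index set of the constraints defining the tangent space. -/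
abbrev Row := K ⊕ (Fin n ⊕ ({i // D.kind i = .upper} ⊕ Unit))

/-- Coefficients of the rescaled linearized constraints in the first component. -/
def rowFst (w : State n K × ℝ) : D.Row → Vec n
  | .inl k => grad (D.ψ k) w.1.1 * D.scale w
  | .inr (.inl i) => Pi.single i (D.coef w i).1
  | .inr (.inr (.inl i)) => Pi.single i.1 (w.1.2.2.1 i.1)
  | .inr (.inr (.inr _)) => 0

/-- Coefficients of the rescaled linearized constraints in the second component. -/
def rowSnd (w : State n K × ℝ) : D.Row → Vec n
  | .inl _ => 0
  | .inr (.inl i) => Pi.single i (D.coef w i).2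
  | .inr (.inr (.inl i)) => Pi.single i.1 (w.1.1 i.1)
  | .inr (.inr (.inr _)) => D.scale w

/-- The rescaled linearized constraints. -/
def row (w : State n K × ℝ) (r : D.Row) : Vec n × Vec n →ₗ[ℝ] ℝ := dotL (D.rowFst w r) (D.rowSnd w r)

/-- The rescaled Hessian of the Lagrangian. -/
def form (w : State n K × ℝ) : (Vec n × Vec n) →ₗ[ℝ] (Vec n × Vec n) →ₗ[ℝ] ℝ :=
  formL (lagForm D.f D.ψ w.1.1 w.1.2.1) (D.scale w) (D.cross w)

theorem continuousAt_scale : ContinuousAt D.scale (D.base, 0) := by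
  refine continuousAt_pi.2 fun i => ?_
  by_cases h : D.kind i = .biact
  · simp only [scale, h, if_true]
    fun_prop
  · simp only [scale, h, if_false]
    fun_prop

theorem continuousAt_ratio {i : Fin n} (hi : D.kind i = .biact) :
    ContinuousAt (fun w : State n K × ℝ => D.ratio i w.1) (D.base, 0) :=
  (D.contDiffAt_ratio hi).continuousAt

theorem continuousAt_cross : ContinuousAt D.cross (D.base, 0) := by
  refine continuousAt_pi.2 fun i => ?_
  cases hi : D.kind i <;> simp only [cross, hi]
  case upper =>
    exact ContinuousAt.div (by fun_prop) (by fun_prop)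
      (show D.y i ≠ 0 by rw [(D.upper i hi).2.1]; exact D.u_pos.ne')
  case free => exact ContinuousAt.div (by fun_prop) (by fun_prop) (D.free i hi).2.1.ne'
  case zero => fun_prop
  case hyper =>
    refine ContinuousAt.div (by fun_prop) (by fun_prop) (show D.x i ≠ 0 from fun h => ?_)
    simpa [h] using (D.hyper i hi).1
  case biact =>
    exact ContinuousAt.div (by fun_prop) (D.continuousAt_ratio hi) (D.ratio_base_pos hi).ne'

theorem continuousAt_coef (i : Fin n) : ContinuousAt (fun w => D.coef w i) (D.base, 0) := by
  cases hi : D.kind i <;> simp only [coef, hi]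
  case biact =>
    have h := D.continuousAt_ratio hi
    exact h.prodMk (continuousAt_const.mul (h.inv₀ (D.ratio_base_pos hi).ne')).neg
  all_goals fun_prop

theorem continuousAt_single {W : Type*} [TopologicalSpace W] {w₀ : W} {p : W → ℝ}
    (hp : ContinuousAt p w₀) (i : Fin n) :
    ContinuousAt (fun w => (Pi.single i (p w) : Vec n)) w₀ :=
  (continuous_single i).continuousAt.comp hp

theorem tendsto_row (r : D.Row) (ξ : Vec n × Vec n) :
    Tendsto (fun w => D.row w r ξ) D.near (𝓝 (D.row (D.base, 0) r ξ)) := by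
  have h1 : ContinuousAt (fun w => D.rowFst w r) (D.base, 0) := by
    rcases r with k | i | i | u
    · exact ((contDiff_grad (D.contDiff_ψ k)).continuous.continuousAt.comp (x := (D.base, (0 : ℝ)))
        (f := fun w : State n K × ℝ => w.1.1) (by fun_prop)).mul D.continuousAt_scale
    · exact continuousAt_single (D.continuousAt_coef i).fst i
    · exact continuousAt_single (by fun_prop) i.1
    · exact continuousAt_const
  have h2 : ContinuousAt (fun w => D.rowSnd w r) (D.base, 0) := by
    rcases r with k | i | i | u
    · exact continuousAt_const
    · exact continuousAt_single (D.continuousAt_coef i).snd i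
    · exact continuousAt_single (by fun_prop) i.1
    · exact D.continuousAt_scale
  refine D.tendsto_near (p := fun w => D.row w r ξ) ?_
  have hdot : ∀ {p : State n K × ℝ → Vec n} (v : Vec n), ContinuousAt p (D.base, 0) →
      ContinuousAt (fun w => dot (p w) v) (D.base, 0) := fun v hp => by
    simp only [dot]
    exact tendsto_finsetSum _ fun i _ => (continuousAt_pi.1 hp i).mul continuousAt_const
  exact (hdot ξ.1 h1).add (hdot ξ.2 h2)

theorem tendsto_form {ξ ζ : State n K × ℝ → Vec n × Vec n} {ξ₀ ζ₀ : Vec n × Vec n}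
    (hξ : Tendsto ξ D.near (𝓝 ξ₀)) (hζ : Tendsto ζ D.near (𝓝 ζ₀)) :
    Tendsto (fun w => D.form w (ξ w) (ζ w)) D.near (𝓝 (D.form (D.base, 0) ξ₀ ζ₀)) := by
  have hs := D.tendsto_near D.continuousAt_scale
  have he := D.tendsto_near D.continuousAt_cross
  have hx := D.tendsto_near (p := fun w => w.1.1) (by fun_prop)
  have hκ := D.tendsto_near (p := fun w => w.1.2.1) (by fun_prop)
  have hξ1 := (continuous_fst.tendsto ξ₀).comp hξ
  have hξ2 := (continuous_snd.tendsto ξ₀).comp hξ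
  have hζ1 := (continuous_fst.tendsto ζ₀).comp hζ
  have hζ2 := (continuous_snd.tendsto ζ₀).comp hζ
  refine Tendsto.sub (tendsto_lagForm D.contDiff_f D.contDiff_ψ hx hκ (hs.mul hξ1) (hs.mul hζ1))
    (tendsto_finsetSum _ fun i _ => ?_)
  have ap := fun {p : State n K × ℝ → Vec n} {p₀ : Vec n} (h : Tendsto p D.near (𝓝 p₀)) =>
    tendsto_pi_nhds.1 h i
  exact (ap he).mul (((ap hξ1).mul (ap hζ2)).add ((ap hζ1).mul (ap hξ2)))

end LocalData

namespace LocalData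

variable {K : Type*} [Fintype K] (D : LocalData n K)

/-- Extension by zero of the coefficients of the second constraints of the pairs of upper kind. -/
def extUpper (a : D.Row → ℝ) (i : Fin n) : ℝ :=
  if h : D.kind i = .upper then a (.inr (.inr (.inl ⟨i, h⟩))) else 0

theorem sum_row (w : State n K × ℝ) (a : D.Row → ℝ) (ξ : Vec n × Vec n) :
    ∑ r, a r * D.row w r ξ = ∑ i,
      (((∑ k, a (.inl k) * grad (D.ψ k) w.1.1 i) * D.scale w i
          + a (.inr (.inl i)) * (D.coef w i).1 + D.extUpper a i * w.1.2.2.1 i) * ξ.1 i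
        + (a (.inr (.inl i)) * (D.coef w i).2 + D.extUpper a i * w.1.1 i
          + a (.inr (.inr (.inr ()))) * D.scale w i) * ξ.2 i) := by
  have hU : ∀ p : Fin n → ℝ, ∑ i : {i // D.kind i = .upper}, a (.inr (.inr (.inl i))) * p i
      = ∑ i, D.extUpper a i * p i := fun p => by
    rw [← Finset.sum_subset (Finset.subset_univ (Finset.univ.filter fun i => D.kind i = .upper))
      (fun i _ hi => by
        have : ¬ D.kind i = .upper := by simpa using hi
        simp [extUpper, this]),
      Finset.sum_subtype (Finset.univ.filter fun i => D.kind i = .upper)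
        (p := fun i => D.kind i = .upper) (by simp)]
    exact Finset.sum_congr rfl fun i _ => by simp [extUpper, i.2]
  have hK : ∑ k, a (.inl k) * dot (grad (D.ψ k) w.1.1 * D.scale w) ξ.1
      = ∑ i, (∑ k, a (.inl k) * grad (D.ψ k) w.1.1 i) * D.scale w i * ξ.1 i := by
    simp only [dot, Finset.mul_sum, Finset.sum_mul]
    rw [Finset.sum_comm]
    exact Finset.sum_congr rfl fun i _ => Finset.sum_congr rfl fun k _ => by
      rw [Pi.mul_apply]; ring
  have hS : dot (D.scale w) ξ.2 = ∑ i, D.scale w i * ξ.2 i := rfl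
  simp only [Fintype.sum_sum_type, row, rowFst, rowSnd, dotL_apply, dot_single, dot_zero_left,
    add_zero, zero_add, Finset.univ_unique, Finset.sum_singleton]
  rw [hK, hU fun i => w.1.2.2.1 i * ξ.1 i + w.1.1 i * ξ.2 i, hS, Finset.mul_sum,
    ← Finset.sum_add_distrib, ← Finset.sum_add_distrib, ← Finset.sum_add_distrib]
  exact Finset.sum_congr rfl fun i _ => by ring

theorem sum_row_eq_zero {w : State n K × ℝ} {a : D.Row → ℝ}
    (ha : ∀ ξ, ∑ r, a r * D.row w r ξ = 0) (i : Fin n) :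
    (∑ k, a (.inl k) * grad (D.ψ k) w.1.1 i) * D.scale w i
        + a (.inr (.inl i)) * (D.coef w i).1 + D.extUpper a i * w.1.2.2.1 i = 0 ∧
      a (.inr (.inl i)) * (D.coef w i).2 + D.extUpper a i * w.1.1 i
        + a (.inr (.inr (.inr ()))) * D.scale w i = 0 := by
  have h1 := ha (Pi.single i 1, 0)
  have h2 := ha (0, Pi.single i 1)
  rw [sum_row, Finset.sum_eq_single i (fun j _ hj => by simp [hj]) (by simp)] at h1 h2
  exact ⟨by simpa using h1, by simpa using h2⟩

theorem row_base_independent (a : D.Row → ℝ)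
    (ha : ∀ ξ, ∑ r, a r * D.row (D.base, 0) r ξ = 0) : a = 0 := by
  have h := D.sum_row_eq_zero ha
  have hfree := (D.free_iff D.i₀).2 rfl
  have hu : a (.inr (.inr (.inr ()))) = 0 := by
    have := (h D.i₀).2
    simpa [coef, hfree, extUpper, base, (D.free _ hfree).1, scale] using this
  have h1 : ∀ i, D.kind i ≠ .free → a (.inr (.inl i)) = 0 := fun i hi => by
    have e := (h i).2
    rw [hu, zero_mul, add_zero] at e
    cases hk : D.kind i
    case upper => simpa [coef, hk, base, (D.upper i hk).1] using e
    case free => exact absurd hk hi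
    case zero => simpa [coef, hk, extUpper] using e
    case hyper =>
      have hx : D.x i ≠ 0 := fun h => by simpa [h] using (D.hyper i hk).1
      simpa [coef, hk, extUpper, base, hx] using e
    case biact =>
      have hs : D.s i ≠ 0 := by rcases D.sign i with hs | hs <;> rw [hs] <;> norm_num
      simpa [coef, hk, extUpper, hs, (D.ratio_base_pos hk).ne'] using e
  obtain ⟨hlam, hτ⟩ := D.licq (fun k => a (.inl k))
    (fun i => if D.kind i = .biact then -∑ k, a (.inl k) * grad (D.ψ k) D.x i
      else a (.inr (.inl i)) * (D.coef (D.base, 0) i).1 + D.extUpper a i * D.y i)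
    (fun i hi => by rcases hi with hi | hi <;> simp [hi, coef, extUpper, base, D.hyper i])
    (fun i => by
      by_cases hb : D.kind i = .biact
      · simp [hb]
      · have e := (h i).1
        simp only [scale, hb, if_false, mul_one] at e ⊢
        rw [← add_assoc]
        exact e)
  have h2 : D.extUpper a = 0 := funext fun i => by
    by_cases hi : D.kind i = .upper
    · have := congrFun hτ i
      simpa [hi, coef, (D.upper i hi).2.1, D.u_pos.ne'] using this
    · simp [extUpper, hi]
  funext r
  rcases r with k | i | i | u
  · exact congrFun hlam k
  · by_cases hi : D.kind i = .free
    · have := congrFun hτ i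
      simpa [hi, coef, extUpper, base, (D.free i hi).2.1.ne'] using this
    · exact h1 i hi
  · have := congrFun h2 i.1
    simpa [extUpper, i.2] using this
  · exact hu

/-- Tangent space in `x` of the unperturbed problem. -/
def tangent₀ : Submodule ℝ (Vec n) where
  carrier := {v | (∀ k, dot (grad (D.ψ k) D.x) v = 0) ∧
    ∀ i, D.kind i ≠ .zero → D.kind i ≠ .hyper → v i = 0}
  zero_mem' := ⟨fun k => dot_zero_right _, fun _ _ _ => rfl⟩
  add_mem' := fun {v v'} hv hv' => ⟨fun k => by
      have h1 := hv.1 k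
      have h2 := hv'.1 k
      simp only [dot, Pi.add_apply, mul_add, Finset.sum_add_distrib] at h1 h2 ⊢
      rw [h1, h2, add_zero], fun i h1 h2 => by
      rw [Pi.add_apply, hv.2 i h1 h2, hv'.2 i h1 h2, add_zero]⟩
  smul_mem' := fun r v hv => ⟨fun k => by
      have h1 := hv.1 k
      simp only [dot, Pi.smul_apply, smul_eq_mul, mul_left_comm _ r, ← Finset.mul_sum] at h1 ⊢
      rw [h1, mul_zero], fun i h1 h2 => by
      rw [Pi.smul_apply, hv.2 i h1 h2, smul_zero]⟩

/-- Hessian in `x` of the Lagrangian of the unperturbed problem. -/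
def hess₀ : Vec n →ₗ[ℝ] Vec n →ₗ[ℝ] ℝ :=
  LinearMap.mk₂ ℝ (fun u v => lagForm D.f D.ψ D.x D.κ u v) (by simp) (by simp) (by simp) (by simp)

theorem hess₀_apply (u v : Vec n) : D.hess₀ u v = lagForm D.f D.ψ D.x D.κ u v := rfl

theorem hess₀_symm (u v : Vec n) : D.hess₀ u v = D.hess₀ v u :=
  lagForm_symm D.contDiff_f D.contDiff_ψ _ _ _ _

theorem exists_orthogonal_tangent₀ : ∃ (N : ℕ) (u : Fin N → Vec n),
    Submodule.span ℝ (Set.range u) = D.tangent₀ ∧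
      (∀ j k, j ≠ k → D.hess₀ (u j) (u k) = 0) ∧ ∀ j, D.hess₀ (u j) (u j) ≠ 0 := by
  obtain ⟨u, hu⟩ := exists_orthogonal_family D.hess₀ D.hess₀_symm D.tangent₀ fun v hv h =>
    D.nondeg v hv.1 hv.2 fun v' h1 h2 => h v' ⟨h1, h2⟩
  exact ⟨_, u, hu⟩

variable {N : ℕ} (u : Fin N → Vec n)

/-- Limit of a basis of the rescaled tangent space. -/
def frame : Fin N ⊕ {i // D.kind i = .biact} → Vec n × Vec n
  | .inl j => (u j, 0)
  | .inr i => (Pi.single i.1 (D.s i * (D.ratio i D.base)⁻¹), Pi.single i.1 (D.ratio i D.base))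

/-- Diagonal of the Gram matrix of `frame`. -/
def diag : Fin N ⊕ {i // D.kind i = .biact} → ℝ
  | .inl j => D.hess₀ (u j) (u j)
  | .inr i => -(2 * (D.s i * D.σ i / D.ratio i D.base))

theorem diag_inr_neg (i : {i // D.kind i = .biact}) : D.diag u (.inr i) < 0 :=
  neg_lt_zero.2 (mul_pos two_pos (div_pos (D.biact i.1 i.2).2.2.1 (D.ratio_base_pos i.2)))

theorem scale_base_mul {v : Vec n} (hv : ∀ i, D.kind i = .biact → v i = 0) :
    D.scale (D.base, 0) * v = v := by
  funext i
  by_cases hi : D.kind i = .biact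
  · simp [hv i hi]
  · simp [scale, hi]

theorem scale_base_mul_single {i : Fin n} (hi : D.kind i = .biact) (r : ℝ) :
    D.scale (D.base, 0) * Pi.single i r = 0 := by
  funext j
  by_cases hj : j = i
  · subst hj
    simp [scale, hi]
  · simp [hj]

theorem form_base_frame_inl {j : Fin N} (hu : u j ∈ D.tangent₀) {ξ : Vec n × Vec n}
    (hξ : ∀ i, D.kind i = .zero ∨ D.kind i = .hyper → ξ.2 i = 0) :
    D.form (D.base, 0) (D.frame u (.inl j)) ξ
      = lagForm D.f D.ψ D.x D.κ (u j) (D.scale (D.base, 0) * ξ.1) := by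
  rw [form, formL_apply, frame, D.scale_base_mul fun i hi => hu.2 i (by simp [hi]) (by simp [hi]),
    Finset.sum_eq_zero, sub_zero]
  · rfl
  · intro i _
    by_cases hi : D.kind i = .zero ∨ D.kind i = .hyper
    · simp [hξ i hi]
    · push Not at hi
      simp [hu.2 i hi.1 hi.2]

theorem form_base_frame_inr (i : {i // D.kind i = .biact}) (ξ : Vec n × Vec n) :
    D.form (D.base, 0) (D.frame u (.inr i)) ξ
      = -(D.σ i / D.ratio i D.base * (D.s i * (D.ratio i D.base)⁻¹ * ξ.2 i
        + ξ.1 i * D.ratio i D.base)) := by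
  rw [form, formL_apply, frame, D.scale_base_mul_single i.2, map_zero, _root_.zero_apply, zero_sub,
    Finset.sum_eq_single i.1]
  · simp [cross, i.2, base]
  · intro j _ hj
    simp [hj]
  · simp

theorem form_base_frame (hu : ∀ j, u j ∈ D.tangent₀)
    (horth : ∀ j k, j ≠ k → D.hess₀ (u j) (u k) = 0) (j k : Fin N ⊕ {i // D.kind i = .biact}) :
    D.form (D.base, 0) (D.frame u j) (D.frame u k) = if j = k then D.diag u j else 0 := by
  rcases j with j | i
  · rcases k with k | i'
    · rw [D.form_base_frame_inl u (hu j) (fun i _ => rfl), frame,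
        D.scale_base_mul fun i hi => (hu k).2 i (by simp [hi]) (by simp [hi])]
      by_cases h : j = k
      · subst h
        simp [diag, hess₀_apply]
      · simpa [h] using (D.hess₀_apply _ _).symm.trans (horth j k h)
    · rw [D.form_base_frame_inl u (hu j), frame, D.scale_base_mul_single i'.2, map_zero]
      · simp
      · intro i hi
        have : i ≠ i'.1 := by
          rintro rfl
          simp [i'.2] at hi
        simp [frame, this]
  · rw [form_base_frame_inr]
    rcases k with k | i'
    · simp [frame, (hu k).2 i (by simp [i.2]) (by simp [i.2])]
    · by_cases h : i = i'
      · subst h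
        have := (D.ratio_base_pos i.2).ne'
        simp only [frame, Pi.single_eq_same, diag, if_true]
        field_simp
        ring
      · have h' : i.1 ≠ i'.1 := fun h' => h (Subtype.ext h')
        simp [frame, h, h']

theorem row_base_frame (hu : ∀ j, u j ∈ D.tangent₀) (j : Fin N ⊕ {i // D.kind i = .biact})
    (r : D.Row) : D.row (D.base, 0) r (D.frame u j) = 0 := by
  rw [row, dotL_apply]
  rcases j with j | i
  · simp only [frame, dot_zero_right, add_zero]
    rcases r with k | i | i | _
    · rw [rowFst, dot_mul, D.scale_base_mul fun i hi => (hu j).2 i (by simp [hi]) (by simp [hi])]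
      exact (hu j).1 k
    · rw [rowFst, dot_single]
      cases hi : D.kind i
      case upper => simp [coef, hi]
      case free => rw [(hu j).2 i (by simp [hi]) (by simp [hi]), mul_zero]
      case zero => simp [coef, hi]
      case hyper => simp [coef, hi, base, (D.hyper i hi).2.1]
      case biact => rw [(hu j).2 i (by simp [hi]) (by simp [hi]), mul_zero]
    · rw [rowFst, dot_single, (hu j).2 i (by simp [i.2]) (by simp [i.2]), mul_zero]
    · simp [rowFst, dot_zero_left]
  · simp only [frame]
    rcases r with k | i' | i' | _
    · simp [rowFst, rowSnd, dot_mul, D.scale_base_mul_single i.2, dot_zero_left, dot_zero_right]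
    · simp only [rowFst, rowSnd, dot_single]
      by_cases h : i' = i.1
      · subst h
        have := (D.ratio_base_pos i.2).ne'
        simp only [coef, i.2, Pi.single_eq_same]
        field_simp
        ring
      · simp [h]
    · have h : i'.1 ≠ i.1 := fun h => by simpa [h, i.2] using i'.2
      simp [rowFst, rowSnd, dot_single, h]
    · simp [rowFst, rowSnd, dot_single_right, scale, i.2]

theorem eq_zero_of_row_base (hu : Submodule.span ℝ (Set.range u) = D.tangent₀)
    {ξ : Vec n × Vec n} (hrow : ∀ r, D.row (D.base, 0) r ξ = 0)
    (hform : ∀ j, D.form (D.base, 0) (D.frame u j) ξ = 0) : ξ = 0 := by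
  have humem : ∀ j, u j ∈ D.tangent₀ := fun j => hu ▸ Submodule.subset_span ⟨j, rfl⟩
  have hpair : ∀ i, (D.coef (D.base, 0) i).1 * ξ.1 i + (D.coef (D.base, 0) i).2 * ξ.2 i = 0 :=
    fun i => by simpa [row, rowFst, rowSnd, dotL_apply, dot_single] using hrow (.inr (.inl i))
  have hb : ∀ i, D.kind i = .biact → ξ.1 i = 0 ∧ ξ.2 i = 0 := fun i hi => by
    have h1 := hpair i
    have h2 := hform (.inr ⟨i, hi⟩)
    rw [form_base_frame_inr] at h2
    have hq := (D.ratio_base_pos hi).ne'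
    have hσ : D.σ i ≠ 0 := fun h => by simpa [h] using (D.biact i hi).2.2.1
    have hs : D.s i ≠ 0 := by rcases D.sign i with hs | hs <;> rw [hs] <;> norm_num
    have h3 := (mul_eq_zero.1 (neg_eq_zero.1 h2)).resolve_left (div_ne_zero hσ hq)
    simp only [coef, hi] at h1
    have h4 : D.ratio i D.base * ξ.1 i = 0 := by linear_combination (h1 + h3) / 2
    have h5 : D.s i * (D.ratio i D.base)⁻¹ * ξ.2 i = 0 := by linear_combination (h3 - h1) / 2
    exact ⟨(mul_eq_zero.1 h4).resolve_left hq,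
      (mul_eq_zero.1 h5).resolve_left (mul_ne_zero hs (inv_ne_zero hq))⟩
  have hfst : ∀ i, D.kind i ≠ .zero → D.kind i ≠ .hyper → ξ.1 i = 0 := fun i h1 h2 => by
    cases hi : D.kind i
    case zero => exact absurd hi h1
    case hyper => exact absurd hi h2
    case biact => exact (hb i hi).1
    case free => simpa [coef, hi, base, (D.free i hi).1, (D.free i hi).2.1.ne'] using hpair i
    case upper =>
      simpa [row, rowFst, rowSnd, dotL_apply, dot_single, dot_zero_left, base, (D.upper i hi).1,
        (D.upper i hi).2.1, D.u_pos.ne'] using hrow (.inr (.inr (.inl ⟨i, hi⟩)))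
  have hsnd' : ∀ i, D.kind i ≠ .free → ξ.2 i = 0 := fun i h1 => by
    cases hi : D.kind i
    case free => exact absurd hi h1
    case biact => exact (hb i hi).2
    case upper => simpa [coef, hi] using hpair i
    case zero => simpa [coef, hi] using hpair i
    case hyper =>
      have hx : D.x i ≠ 0 := fun h => by simpa [h] using (D.hyper i hi).1
      simpa [coef, hi, base, (D.hyper i hi).2.1, hx] using hpair i
  have hsnd : ξ.2 = 0 := funext fun i => by
    by_cases hi : D.kind i = .free
    · have h := hrow (.inr (.inr (.inr ())))
      rw [row, dotL_apply, rowFst, rowSnd, dot_zero_left, zero_add, dot,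
        Finset.sum_eq_single i (fun j _ hj => by
          rw [hsnd' j fun h => hj (((D.free_iff j).1 h).trans ((D.free_iff i).1 hi).symm),
            mul_zero]) (by simp)] at h
      simpa [scale, hi] using h
    · exact hsnd' i hi
  have hsc : D.scale (D.base, 0) * ξ.1 = ξ.1 := D.scale_base_mul fun i hi => (hb i hi).1
  have hmem : ξ.1 ∈ D.tangent₀ := ⟨fun k => by
    have := hrow (.inl k)
    rwa [row, dotL_apply, rowFst, rowSnd, dot_zero_left, add_zero, dot_mul, hsc] at this, hfst⟩
  have hfst0 : ξ.1 = 0 := by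
    refine D.nondeg ξ.1 hmem.1 hmem.2 fun v h1 h2 => ?_
    have hv : v ∈ Submodule.span ℝ (Set.range u) := hu ▸ (⟨h1, h2⟩ : v ∈ D.tangent₀)
    refine (Submodule.span_le (p := (D.hess₀ ξ.1).ker)).2 ?_ hv
    rintro _ ⟨j, rfl⟩
    have := hform (.inl j)
    rw [D.form_base_frame_inl u (humem j) (fun i _ => congrFun hsnd i), hsc] at this
    exact (D.hess₀_symm _ _).trans this
  exact Prod.ext hfst0 hsnd

end LocalData

namespace LocalData

variable {K : Type*} [Fintype K] (D : LocalData n K)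

/-- Tangent space of the regularized problem. -/
def tangent (w : State n K × ℝ) (ξ : Vec n × Vec n) : Prop :=
  (∀ k, dot (grad (D.ψ k) w.1.1) ξ.1 = 0) ∧
  (∀ i, D.kind i = .upper ∨ D.kind i = .zero → ξ.2 i = 0) ∧
  ∑ i, ξ.2 i = 0 ∧
  ∀ i, D.kind i ≠ .zero → w.1.2.2.1 i * ξ.1 i + w.1.1 i * ξ.2 i = 0

/-- Multipliers of the bilinear constraints of the regularized problem. -/
def eta (w : State n K × ℝ) : Vec n := fun i =>
  if D.kind i = .zero then 0 else w.1.2.2.2.1 i / w.1.2.2.1 i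

/-- Hessian of the Lagrangian of the regularized problem. -/
def hessReg (w : State n K × ℝ) : (Vec n × Vec n) →ₗ[ℝ] (Vec n × Vec n) →ₗ[ℝ] ℝ :=
  formL (lagForm D.f D.ψ w.1.1 w.1.2.1) 1 (D.eta w)

theorem hessReg_apply (w : State n K × ℝ) (ξ ζ : Vec n × Vec n) :
    D.hessReg w ξ ζ = lagForm D.f D.ψ w.1.1 w.1.2.1 ξ.1 ζ.1
      - ∑ i, D.eta w i * (ξ.1 i * ζ.2 i + ζ.1 i * ξ.2 i) := by
  rw [hessReg, formL_apply, one_mul, one_mul]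

variable {D}

namespace IsRegular

variable {w : State n K × ℝ} (hw : D.IsRegular w)
include hw

theorem cross_eq : D.cross w = D.eta w * D.scale w ^ 2 := by
  funext i
  have hpos := hw.pos
  have hy := hw.y_pos i
  have hm := hw.mult_eq i
  cases hi : D.kind i <;> simp only [hi, ne_eq, reduceCtorEq, not_false_eq_true, forall_const,
    not_true_eq_false, false_imp_iff] at hy hm <;> simp [cross, eta, scale, hi]
  case hyper =>
    have hx := hw.hyper i hi
    rw [div_eq_div_iff hx hy.ne']
    exact hm.symm
  case biact =>
    have hq := (hw.biact i hi).1
    rw [(hw.biact i hi).2.1]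
    field_simp

theorem form_eq (ξ ζ : Vec n × Vec n) :
    D.form w ξ ζ = D.hessReg w (scaleL (D.scale w) ξ) (scaleL (D.scale w) ζ) := by
  rw [hessReg, formL_scaleL, ← hw.cross_eq, form]

theorem scale_ne_zero (i : Fin n) : D.scale w i ≠ 0 := by
  rw [scale]
  split_ifs
  · exact hw.pos.ne'
  · exact one_ne_zero

theorem coef_eq {i : Fin n} (h₁ : D.kind i ≠ .upper) (h₂ : D.kind i ≠ .zero) :
    w.1.2.2.1 i * D.scale w i = D.scale w i ^ 3 * (D.coef w i).1 ∧
      w.1.1 i * D.scale w i = D.scale w i ^ 3 * (D.coef w i).2 := by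
  cases hi : D.kind i
  case upper => exact absurd hi h₁
  case zero => exact absurd hi h₂
  case free => simp [scale, coef, hi]
  case hyper => simp [scale, coef, hi]
  case biact =>
    obtain ⟨-, hy, hx⟩ := hw.biact i hi
    simp only [scale, coef, hi, if_true]
    constructor
    · rw [hy]; ring
    · rw [hx]; ring

theorem tangent_scaleL_iff (ξ : Vec n × Vec n) :
    D.tangent w (scaleL (D.scale w) ξ) ↔ ∀ r, D.row w r ξ = 0 := by
  have hS : ∑ i, (D.scale w * ξ.2) i = dot (D.scale w) ξ.2 := rfl
  have hcoef : ∀ i, D.kind i ≠ .upper → D.kind i ≠ .zero →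
      (w.1.2.2.1 i * (D.scale w * ξ.1) i + w.1.1 i * (D.scale w * ξ.2) i = 0 ↔
        (D.coef w i).1 * ξ.1 i + (D.coef w i).2 * ξ.2 i = 0) := fun i h₁ h₂ => by
    obtain ⟨e₁, e₂⟩ := hw.coef_eq h₁ h₂
    have : w.1.2.2.1 i * (D.scale w * ξ.1) i + w.1.1 i * (D.scale w * ξ.2) i
        = D.scale w i ^ 3 * ((D.coef w i).1 * ξ.1 i + (D.coef w i).2 * ξ.2 i) := by
      simp only [Pi.mul_apply]
      linear_combination ξ.1 i * e₁ + ξ.2 i * e₂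
    rw [this, mul_eq_zero, or_iff_right (pow_ne_zero 3 (hw.scale_ne_zero i))]
  have hrow : (∀ r, D.row w r ξ = 0) ↔
      (∀ k, dot (grad (D.ψ k) w.1.1) (D.scale w * ξ.1) = 0) ∧
      (∀ i, (D.coef w i).1 * ξ.1 i + (D.coef w i).2 * ξ.2 i = 0) ∧
      (∀ i, D.kind i = .upper → w.1.2.2.1 i * ξ.1 i + w.1.1 i * ξ.2 i = 0) ∧
      dot (D.scale w) ξ.2 = 0 := by
    simp only [Sum.forall, row, rowFst, rowSnd, dotL_apply, dot_single, dot_zero_left, dot_mul,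
      add_zero, zero_add, Subtype.forall, forall_const]
  have hsc : ∀ i, D.kind i ≠ .biact → D.scale w i = 1 := fun i hi => by simp [scale, hi]
  rw [hrow, tangent]
  simp only [scaleL, LinearMap.coe_mk, AddHom.coe_mk, hS]
  refine and_congr_right fun _ => ⟨fun ⟨h1, h2, h3⟩ => ⟨fun i => ?_, fun i hi => ?_, h2⟩,
    fun ⟨h1, h2, h3⟩ => ⟨fun i hi => ?_, h3, fun i hi => ?_⟩⟩
  · by_cases hi : D.kind i = .upper ∨ D.kind i = .zero
    · have := h1 i hi
      rcases hi with hi | hi <;> simpa [scale, coef, hi] using this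
    · push Not at hi
      exact (hcoef i hi.1 hi.2).1 (h3 i hi.2)
  · simpa [hsc i (by simp [hi])] using h3 i (by simp [hi])
  · have := h1 i
    rcases hi with hi | hi <;> simpa [scale, coef, hi] using this
  · by_cases hi' : D.kind i = .upper
    · simpa [hsc i (by simp [hi'])] using h2 i hi'
    · exact (hcoef i hi' hi).2 (h1 i)

/-- Independence of the rescaled constraints gives independence of the constraints. -/
theorem independent
    (hind : ∀ a : D.Row → ℝ, (∀ ξ, ∑ r, a r * D.row w r ξ = 0) → a = 0)
    (lam : K → ℝ) (ν : Vec n) (m : ℝ) (e : Vec n)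
    (hν : ∀ i, D.kind i ≠ .upper → D.kind i ≠ .zero → ν i = 0)
    (he : ∀ i, D.kind i = .zero → e i = 0)
    (h₁ : ∀ i, ∑ k, lam k * grad (D.ψ k) w.1.1 i + e i * w.1.2.2.1 i = 0)
    (h₂ : ∀ i, ν i + m + e i * w.1.1 i = 0) : lam = 0 ∧ ν = 0 ∧ m = 0 ∧ e = 0 := by
  let a : D.Row → ℝ
    | .inl k => lam k
    | .inr (.inl i) =>
        if D.kind i = .upper ∨ D.kind i = .zero then ν i else e i * D.scale w i ^ 3
    | .inr (.inr (.inl i)) => e i.1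
    | .inr (.inr (.inr _)) => m
  have ha : a = 0 := hind a fun ξ => by
    rw [sum_row]
    refine Finset.sum_eq_zero fun i _ => ?_
    have e₁ := h₁ i
    have e₂ := h₂ i
    by_cases hi : D.kind i = .upper ∨ D.kind i = .zero
    · rcases hi with hi | hi
      · simp only [a, extUpper, hi, coef, scale, dif_pos, true_or, if_true, reduceCtorEq, if_false]
        linear_combination ξ.1 i * e₁ + ξ.2 i * e₂
      · rw [he i hi] at e₁ e₂
        simp only [a, extUpper, hi, coef, scale, or_true, if_true, reduceCtorEq, if_false,
          dif_neg, not_false_eq_true]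
        linear_combination ξ.1 i * e₁ + ξ.2 i * e₂
    · have hi' := hi
      push Not at hi'
      obtain ⟨c₁, c₂⟩ := hw.coef_eq hi'.1 hi'.2
      rw [hν i hi'.1 hi'.2] at e₂
      simp only [a, extUpper, hi'.1, hi'.2, or_self, if_false, dif_neg, not_false_eq_true]
      linear_combination ξ.1 i * (D.scale w i * e₁ - e i * c₁)
        + ξ.2 i * (D.scale w i * e₂ - e i * c₂)
  have hν0 : ∀ i, ν i = 0 := fun i => by
    by_cases hi : D.kind i = .upper ∨ D.kind i = .zero
    · simpa [a, hi] using congrFun ha (.inr (.inl i))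
    · push Not at hi
      exact hν i hi.1 hi.2
  refine ⟨funext fun k => congrFun ha (.inl k), funext hν0, congrFun ha (.inr (.inr (.inr ()))),
    funext fun i => ?_⟩
  by_cases hi : D.kind i = .upper
  · exact congrFun ha (.inr (.inr (.inl ⟨i, hi⟩)))
  · by_cases hi' : D.kind i = .zero
    · exact he i hi'
    · simpa [a, hi, hi', hw.scale_ne_zero i] using congrFun ha (.inr (.inl i))

theorem tangent_iff_mem_span {ι : Type*} {β : ι → Vec n × Vec n}
    (hβ : ∀ ξ, (∀ r, D.row w r ξ = 0) ↔ ξ ∈ Submodule.span ℝ (Set.range β)) (ζ : Vec n × Vec n) :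
    D.tangent w ζ ↔ ζ ∈ Submodule.span ℝ (Set.range fun j => scaleL (D.scale w) (β j)) := by
  have hinv : ∀ v : Vec n, D.scale w * ((D.scale w)⁻¹ * v) = v := fun v => funext fun i => by
    simp [hw.scale_ne_zero i]
  have hζ : scaleL (D.scale w) (scaleL (D.scale w)⁻¹ ζ) = ζ :=
    Prod.ext (hinv ζ.1) (hinv ζ.2)
  have hinv' : ∀ v : Vec n, (D.scale w)⁻¹ * (D.scale w * v) = v := fun v => funext fun i => by
    simp [hw.scale_ne_zero i]
  have hinj : Function.Injective (scaleL (D.scale w)) := fun ξ ξ' h => by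
    refine Prod.ext ?_ ?_
    · rw [← hinv' ξ.1, ← hinv' ξ'.1]
      exact congrArg (fun z => (D.scale w)⁻¹ * z.1) h
    · rw [← hinv' ξ.2, ← hinv' ξ'.2]
      exact congrArg (fun z => (D.scale w)⁻¹ * z.2) h
  have hspan : Submodule.span ℝ (Set.range fun j => scaleL (D.scale w) (β j))
      = (Submodule.span ℝ (Set.range β)).map (scaleL (D.scale w)) := by
    rw [Submodule.map_span, ← Set.range_comp]
    rfl
  rw [← hζ, hw.tangent_scaleL_iff, hβ, hspan]
  exact (hinj.mem_set_image (s := Submodule.span ℝ (Set.range β))).symm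

end IsRegular

variable (D)

theorem negIndex_base {N : ℕ} {u : Fin N → Vec n}
    (hu : Submodule.span ℝ (Set.range u) = D.tangent₀)
    (horth : ∀ j k, j ≠ k → D.hess₀ (u j) (u k) = 0) (hd : ∀ j, D.hess₀ (u j) (u j) ≠ 0) :
    negIndex (fun ξ ζ => D.hess₀ ξ.1 ζ.1) (fun ξ => ξ.1 ∈ D.tangent₀ ∧ ξ.2 = 0)
      = Fintype.card {j // D.hess₀ (u j) (u j) < 0} := by
  let B : (Vec n × Vec n) →ₗ[ℝ] (Vec n × Vec n) →ₗ[ℝ] ℝ :=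
    D.hess₀.compl₁₂ (LinearMap.fst ℝ _ _) (LinearMap.fst ℝ _ _)
  have hB : NearDiag B (fun j => LinearMap.inl ℝ (Vec n) (Vec n) (u j))
      (fun j => D.hess₀ (u j) (u j)) 0 := fun j k => by
    by_cases h : j = k
    · subst h
      simp [B]
    · simp [B, h, horth j k h]
  refine hB.negIndex_eq le_rfl (fun j => by simpa using hd j) fun ξ => ?_
  have hspan : Submodule.span ℝ (Set.range fun j => LinearMap.inl ℝ (Vec n) (Vec n) (u j))
      = D.tangent₀.map (LinearMap.inl ℝ (Vec n) (Vec n)) := by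
    rw [← hu, Submodule.map_span, ← Set.range_comp]
    rfl
  rw [hspan]
  constructor
  · rintro ⟨h1, h2⟩
    exact ⟨ξ.1, h1, Prod.ext rfl h2.symm⟩
  · rintro ⟨v, hv, rfl⟩
    exact ⟨hv, rfl⟩

/-- Solutions of the regularized system close to the base point satisfy the regularity conditions
of a nondegenerate stationary point, and each biactive pair adds one to the quadratic index. -/
theorem eventually_nondegenerate : ∀ᶠ w in D.near, D.IsRegular w ∧
    (∀ (lam : K → ℝ) (ν : Vec n) (m : ℝ) (e : Vec n),
      (∀ i, D.kind i ≠ .upper → D.kind i ≠ .zero → ν i = 0) →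
      (∀ i, D.kind i = .zero → e i = 0) →
      (∀ i, ∑ k, lam k * grad (D.ψ k) w.1.1 i + e i * w.1.2.2.1 i = 0) →
      (∀ i, ν i + m + e i * w.1.1 i = 0) → lam = 0 ∧ ν = 0 ∧ m = 0 ∧ e = 0) ∧
    (∀ ξ, D.tangent w ξ → (∀ ζ, D.tangent w ζ → D.hessReg w ξ ζ = 0) → ξ = 0) ∧
    negIndex (fun ξ ζ => D.hessReg w ξ ζ) (D.tangent w)
      = negIndex (fun ξ ζ => D.hess₀ ξ.1 ζ.1) (fun ξ => ξ.1 ∈ D.tangent₀ ∧ ξ.2 = 0)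
        + Fintype.card {i // D.kind i = .biact} := by
  obtain ⟨N, u, hu, horth, hd⟩ := D.exists_orthogonal_tangent₀
  have humem : ∀ j, u j ∈ D.tangent₀ := fun j => hu ▸ Submodule.subset_span ⟨j, rfl⟩
  have hdiag : ∀ j, D.diag u j ≠ 0 := by
    rintro (j | i)
    · exact hd j
    · exact (D.diag_inr_neg u i).ne
  have hframe : ∀ j k, D.form (D.base, 0) (D.frame u j) (D.frame u k)
      = @ite ℝ (j = k) (Classical.propDecidable _) (D.diag u j) 0 := fun j k => by
    rw [D.form_base_frame u humem horth]
    congr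
  obtain ⟨β, hβ, hker⟩ := exists_kernel_family D.tendsto_row D.row_base_independent
    (D.form (D.base, 0)) (D.frame u) (D.diag u) hframe hdiag
    (fun j r => D.row_base_frame u humem j r) (fun ξ h1 h2 => D.eq_zero_of_row_base u hu h1 h2)
  obtain ⟨δ, hδ, hδd⟩ : ∃ δ : ℝ, 0 < δ ∧
      ∀ j, δ * Fintype.card (Fin N ⊕ {i // D.kind i = .biact}) < |D.diag u j| := by
    have h1 : ∀ᶠ δ in 𝓝[>] (0 : ℝ),
        ∀ j, δ * Fintype.card (Fin N ⊕ {i // D.kind i = .biact}) < |D.diag u j| := by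
      refine eventually_all.2 fun j => ?_
      have h2 : Tendsto (fun δ : ℝ => δ * Fintype.card (Fin N ⊕ {i // D.kind i = .biact}))
          (𝓝[>] 0) (𝓝 (0 * Fintype.card (Fin N ⊕ {i // D.kind i = .biact}))) :=
        (tendsto_id.mono_left nhdsWithin_le_nhds).mul_const _
      rw [zero_mul] at h2
      exact h2.eventually_lt_const (abs_pos.2 (hdiag j))
    obtain ⟨δ, h1, h2⟩ := (h1.and self_mem_nhdsWithin).exists
    exact ⟨δ, h2, h1⟩
  have hgram : ∀ᶠ w in D.near, NearDiag (D.form w) (β w) (D.diag u) δ := by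
    refine eventually_all.2 fun j => eventually_all.2 fun k => ?_
    have h1 := D.tendsto_form (hβ j) (hβ k)
    rw [hframe] at h1
    filter_upwards [h1.eventually (Metric.ball_mem_nhds _ hδ)] with w hw
    rw [← Real.dist_eq]
    exact (Metric.mem_ball.1 hw).le
  filter_upwards [D.eventually_isRegular, hker, hgram] with w hw hker hgram
  have hspan := hw.tangent_iff_mem_span hker.2
  have hB : NearDiag (D.hessReg w) (fun j => scaleL (D.scale w) (β w j)) (D.diag u) δ :=
    fun j k => by
      have := hgram j k
      rwa [hw.form_eq] at this
  refine ⟨hw, hw.independent hker.1, fun ξ h1 h2 => hB.eq_zero_of_mem hδ.le hδd ((hspan ξ).1 h1)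
    fun k => h2 _ ((hspan _).2 (Submodule.subset_span ⟨k, rfl⟩)), ?_⟩
  rw [hB.negIndex_eq hδ.le hδd hspan, D.negIndex_base hu horth hd,
    Fintype.card_congr Equiv.subtypeSum, Fintype.card_sum]
  exact congrArg _ (Fintype.card_congr (Equiv.subtypeUnivEquiv (D.diag_inr_neg u)))

end LocalData

/-! ### Local data of a nondegenerate T-stationary point -/

theorem sum_smul_ex (S : Finset (Fin n)) (r : Vec n) :
    ∑ i ∈ S, r i • ex i = ((fun i => if i ∈ S then r i else 0 : Vec n), (0 : Vec n)) := by
  refine Prod.ext (funext fun j => ?_) (funext fun j => ?_)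
  · simp [Prod.fst_sum, ex, Finset.sum_apply, Pi.single_apply]
  · simp [Prod.snd_sum, ex]

theorem sum_smul_ey (S : Finset (Fin n)) (r : Vec n) :
    ∑ i ∈ S, r i • ey i = ((0 : Vec n), (fun i => if i ∈ S then r i else 0 : Vec n)) := by
  refine Prod.ext (funext fun j => ?_) (funext fun j => ?_)
  · simp [Prod.fst_sum, ey]
  · simp [Prod.snd_sum, ey, Finset.sum_apply, Pi.single_apply]

theorem sum_smul_hvec (S : Finset (Fin n)) (r x y : Vec n) :
    ∑ i ∈ S, r i • hvec x y i = ((fun i => if i ∈ S then r i * y i else 0 : Vec n),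
      (fun i => if i ∈ S then r i * x i else 0 : Vec n)) := by
  refine Prod.ext (funext fun j => ?_) (funext fun j => ?_)
  · simp [Prod.fst_sum, hvec, Finset.sum_apply, Pi.single_apply]
  · simp [Prod.snd_sum, hvec, Finset.sum_apply, Pi.single_apply]

theorem sum_smul_pair_zero {ι : Type*} (S : Finset ι) (r : ι → ℝ) (v : ι → Vec n) :
    ∑ k ∈ S, r k • ((v k, (0 : Vec n)) : Vec n × Vec n)
      = ((fun i => ∑ k ∈ S, r k * v k i : Vec n), (0 : Vec n)) := by
  refine Prod.ext (funext fun j => ?_) (funext fun j => ?_)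
  · simp [Prod.fst_sum, Finset.sum_apply]
  · simp [Prod.snd_sum]

theorem sum_ite_mul_eq (S : Finset (Fin n)) (r v : Vec n) :
    ∑ i ∈ S, r i * v i = dot (fun i => if i ∈ S then r i else 0) v := by
  simp [dot, ite_mul]

/-- The active constraint functions not involving `y`. -/
def actFun (D : Setting n P Q) (x : Vec n) : P ⊕ {q // q ∈ Q0 D x} → Vec n → ℝ :=
  Sum.elim D.h fun q => D.g q

/-- Extension by zero of multipliers of active inequality constraints. -/
def extMult {D : Setting n P Q} {x : Vec n} (κ : P ⊕ {q // q ∈ Q0 D x} → ℝ) (q : Q) : ℝ :=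
  if h : q ∈ Q0 D x then κ (.inr ⟨q, h⟩) else 0

theorem extMult_elim {D : Setting n P Q} {x : Vec n} (a : P → ℝ) (b : Q → ℝ) {q : Q}
    (hq : q ∈ Q0 D x) :
    extMult (Sum.elim a fun q : {q // q ∈ Q0 D x} => b q) q = b q := by
  simp [extMult, hq]

theorem sum_actFun (D : Setting n P Q) (x : Vec n) (κ : P ⊕ {q // q ∈ Q0 D x} → ℝ)
    (F : (Vec n → ℝ) → ℝ) :
    ∑ k, κ k * F (actFun D x k)
      = ∑ p, κ (.inl p) * F (D.h p) + ∑ q ∈ Q0 D x, extMult κ q * F (D.g q) := by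
  rw [Fintype.sum_sum_type, Finset.sum_subtype (Q0 D x) (p := fun q => q ∈ Q0 D x) (fun _ => Iff.rfl)]
  congr 1
  exact Finset.sum_congr rfl fun q _ => by simp [extMult, q.2, actFun]

theorem contDiff_actFun (D : Setting n P Q) (x : Vec n) : ∀ k, ContDiff ℝ 2 (actFun D x k)
  | .inl p => D.hh p
  | .inr q => D.hg q

section TStationary

variable {D : Setting n P Q} {x y : Vec n} {M : TMult n P Q}

/-- The multiplier of `x`. -/
def sigma (x y : Vec n) (M : TMult n P Q) : Vec n := fun i =>
  (if i ∈ a01 x y then M.sig1 i else 0) + if i ∈ a00 x y then M.rho1 i else 0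

/-- The multipliers of the active constraints not involving `y`. -/
def actMult (D : Setting n P Q) (x : Vec n) (M : TMult n P Q) : P ⊕ {q // q ∈ Q0 D x} → ℝ :=
  Sum.elim M.lam fun q => M.mu1 q

/-- The kind of the pair `i`. -/
def kindOf (D : Setting n P Q) (x y : Vec n) (M : TMult n P Q) (i : Fin n) : Kind :=
  if y i = 1 + D.ε then .upper
  else if 0 < y i then .free
  else if x i = 0 then .biact
  else if M.mu3 < D.c i then .zero
  else .hyper

/-- The sign of the multiplier of `x i` in the regularized problem. -/
def signOf (x y : Vec n) (M : TMult n P Q) (i : Fin n) : ℝ :=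
  if x i = 0 then if 0 < sigma x y M i then 1 else -1
  else if 0 < x i then -1 else 1

theorem TStatAt.fst_eq (h : TStatAt D x y M) (i : Fin n) :
    grad D.f x i - ∑ k, actMult D x M k * grad (actFun D x k) x i - sigma x y M i = 0 := by
  have e := congrFun (congrArg Prod.fst h.2.2.2.2.2.2) i
  have hsum : ∑ q ∈ Q0 D x, extMult (actMult D x M) q * grad (D.g q) x i
      = ∑ q ∈ Q0 D x, M.mu1 q * grad (D.g q) x i :=
    Finset.sum_congr rfl fun q hq => by rw [actMult, extMult_elim _ _ hq]
  rw [Finset.sum_add_distrib, sum_smul_ex, sum_smul_ey, sum_smul_ex, sum_smul_ey, sum_smul_ey,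
    sum_smul_pair_zero, sum_smul_pair_zero] at e
  rw [sum_actFun D x _ fun φ => grad φ x i, hsum]
  simp only [eAll, Prod.fst_add, Prod.fst_sub, Prod.smul_fst, Pi.add_apply,
    smul_zero, sub_zero, add_zero] at e
  simp only [sigma, actMult, Sum.elim_inl]
  linarith

theorem TStatAt.snd_eq (h : TStatAt D x y M) (i : Fin n) :
    D.c i = -(if i ∈ Eact D y then M.mu2 i else 0) + M.mu3
      + (if i ∈ a10 x y then M.sig2 i else 0) + if i ∈ a00 x y then M.rho2 i else 0 := by
  have e := congrFun (congrArg Prod.snd h.2.2.2.2.2.2) i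
  rw [Finset.sum_add_distrib, sum_smul_ex, sum_smul_ey, sum_smul_ex, sum_smul_ey, sum_smul_ey,
    sum_smul_pair_zero, sum_smul_pair_zero] at e
  simp only [eAll, Prod.snd_add, Prod.snd_sub, Prod.smul_snd, Pi.add_apply, Pi.sub_apply,
    Pi.zero_apply, Pi.smul_apply, smul_eq_mul, mul_one, add_zero, zero_add] at e
  linarith

theorem kindOf_eq_upper {i : Fin n} : kindOf D x y M i = .upper ↔ y i = 1 + D.ε := by
  unfold kindOf
  split_ifs <;> simp_all

theorem kindOf_eq_free {i : Fin n} :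
    kindOf D x y M i = .free ↔ y i ≠ 1 + D.ε ∧ 0 < y i := by
  unfold kindOf
  split_ifs <;> simp_all

variable (hnd : NondegTStatAt D x y M)
include hnd

theorem NondegTStatAt.lt_of_upper {i : Fin n} (hi : y i = 1 + D.ε) : D.c i < M.mu3 := by
  have hpos : 0 < y i := by rw [hi]; linarith [D.hεpos]
  have hE : i ∈ Eact D y := by simp [Eact, hi]
  have := hnd.1.snd_eq i
  simp only [hE, a10, a00, hpos.ne', Finset.mem_filter, and_false, if_true, if_false] at this
  linarith [hnd.2.2.2.1 i hE]

theorem NondegTStatAt.eq_of_free {i : Fin n} (hi : y i ≠ 1 + D.ε) (hpos : 0 < y i) :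
    D.c i = M.mu3 := by
  have := hnd.1.snd_eq i
  simpa [Eact, hi, a10, a00, hpos.ne'] using this

theorem NondegTStatAt.lt_of_biact {i : Fin n} (hi : i ∈ a00 x y) : D.c i < M.mu3 := by
  have h := hnd.1.snd_eq i
  have hi' : x i = 0 ∧ y i = 0 := by simpa [a00] using hi
  have hε : (0 : ℝ) ≠ 1 + D.ε := by linarith [D.hεpos]
  simp only [Eact, hi', hε, a10, hi, Finset.mem_filter, not_true_eq_false, ne_eq, false_and,
    and_false, if_true, if_false] at h
  linarith [(hnd.2.2.2.2.2.1 i hi).2]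

theorem NondegTStatAt.nonneg (i : Fin n) : 0 ≤ y i := (hnd.1.1.2.2.2.2 i).1

theorem NondegTStatAt.fst_eq_zero {i : Fin n} (hi : 0 < y i) : x i = 0 :=
  (mul_eq_zero.1 (hnd.1.1.2.2.2.1 i)).resolve_right hi.ne'

theorem NondegTStatAt.mu3_pos : 0 < M.mu3 := by
  have h1 : (0 : ℝ) < ∑ i, y i := by
    have : (D.s : ℝ) < n := by exact_mod_cast D.hs
    linarith [hnd.1.1.2.2.1]
  obtain ⟨i, -, hi⟩ := Finset.exists_lt_of_sum_lt
    (show ∑ i : Fin n, (0 : ℝ) < ∑ i, y i by simpa using h1)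
  by_cases hE : y i = 1 + D.ε
  · exact (D.hcpos i).trans (hnd.lt_of_upper hE)
  · exact hnd.eq_of_free hE hi ▸ D.hcpos i

theorem NondegTStatAt.sum_eq : ∑ i, y i = (n : ℝ) - D.s :=
  sub_eq_zero.1 ((mul_eq_zero.1 hnd.1.2.2.2.2.1).resolve_left hnd.mu3_pos.ne')

theorem NondegTStatAt.exists_free : ∃ i, y i ≠ 1 + D.ε ∧ 0 < y i := by
  by_contra! hne
  have h := hnd.2.1 0 0 (fun _ => -1) 1 0 (fun _ => -1) (fun h => absurd hnd.sum_eq h) (by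
    have e₁ := sum_smul_ey (Eact D y) fun _ => -1
    have e₂ := sum_smul_ey (a10 x y ∪ a00 x y) fun _ => -1
    rw [e₁, e₂]
    refine Prod.ext (funext fun i => by simp [eAll]) (funext fun i => ?_)
    have hε := D.hεpos
    by_cases hE : y i = 1 + D.ε
    · have hy : y i ≠ 0 := by rw [hE]; linarith
      have hE' : 1 + D.ε ≠ 0 := by linarith
      simp [eAll, Eact, a10, a00, hE, hE']
    · have hy : y i = 0 := le_antisymm (hne i hE) (hnd.nonneg i)
      have hE' : 0 ≠ 1 + D.ε := by linarith
      by_cases hx : x i = 0 <;> simp [eAll, Eact, a10, a00, hy, hx, hE'])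
  exact one_ne_zero h.2.2.2.1

theorem NondegTStatAt.kindOf_eq_biact {i : Fin n} :
    kindOf D x y M i = .biact ↔ i ∈ a00 x y := by
  have hε := D.hεpos
  have hy := hnd.nonneg i
  have : i ∈ a00 x y ↔ x i = 0 ∧ y i = 0 := by simp [a00]
  rw [this]
  unfold kindOf
  split_ifs with h1 h2 h3 h4
  · simp only [false_iff]
    rintro ⟨-, h⟩
    linarith
  · simp [h2.ne']
  · simpa [h3] using le_antisymm (not_lt.1 h2) hy
  · simp [h3]
  · simp [h3]

theorem NondegTStatAt.kindOf_zero_or_hyper {i : Fin n} :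
    kindOf D x y M i = .zero ∨ kindOf D x y M i = .hyper ↔ i ∈ a10 x y := by
  have hε := D.hεpos
  have hy := hnd.nonneg i
  have : i ∈ a10 x y ↔ x i ≠ 0 ∧ y i = 0 := by simp [a10]
  rw [this]
  unfold kindOf
  split_ifs with h1 h2 h3 h4
  · simp only [false_or, false_iff]
    rintro ⟨-, h⟩
    linarith
  · simp [h2.ne']
  · simp [h3]
  · simpa [h3] using le_antisymm (not_lt.1 h2) hy
  · simpa [h3] using le_antisymm (not_lt.1 h2) hy

theorem NondegTStatAt.notMem_a10_iff {i : Fin n} :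
    kindOf D x y M i ≠ .zero ∧ kindOf D x y M i ≠ .hyper ↔ i ∈ a00 x y ∪ a01 x y := by
  rw [← not_or, hnd.kindOf_zero_or_hyper]
  rcases (hnd.nonneg i).eq_or_lt with h | h
  · by_cases hx : x i = 0 <;> simp [a10, a00, a01, ← h, hx]
  · simp [a10, a00, a01, h, h.ne', hnd.fst_eq_zero h]

theorem NondegTStatAt.sigma_ne_zero (hσ : ∀ i ∈ a01 x y, M.sig1 i ≠ 0) {i : Fin n}
    (hi : i ∈ a00 x y ∪ a01 x y) : sigma x y M i ≠ 0 := by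
  rcases Finset.mem_union.1 hi with h | h
  · have h' : i ∉ a01 x y := by simp_all [a00, a01]
    simpa [sigma, h, h'] using (hnd.2.2.2.2.2.1 i h).1
  · have h' : i ∉ a00 x y := by
      have h0 : x i = 0 ∧ 0 < y i := by simpa [a01] using h
      simp [a00, h0.2.ne']
    simpa [sigma, h, h'] using hσ i h

theorem NondegTStatAt.sign_mul_sigma_pos (hσ : ∀ i ∈ a01 x y, M.sig1 i ≠ 0) {i : Fin n}
    (hi : i ∈ a00 x y ∪ a01 x y) : 0 < signOf x y M i * sigma x y M i := by
  have hx : x i = 0 := by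
    rcases Finset.mem_union.1 hi with h | h
    · exact (Finset.mem_filter.1 h).2.1
    · exact (Finset.mem_filter.1 h).2.1
  have h := hnd.sigma_ne_zero hσ hi
  rw [signOf, if_pos hx]
  split_ifs with h0
  · simpa using h0
  · simpa using lt_of_le_of_ne (not_lt.1 h0) h

theorem NondegTStatAt.licq (lam : P ⊕ {q // q ∈ Q0 D x} → ℝ) (τ : Vec n)
    (hτ : ∀ i, kindOf D x y M i = .zero ∨ kindOf D x y M i = .hyper → τ i = 0)
    (h : ∀ i, ∑ k, lam k * grad (actFun D x k) x i + τ i = 0) : lam = 0 ∧ τ = 0 := by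
  have hτ' : ∀ i, (if i ∈ a01 x y ∪ a00 x y then τ i else 0) = τ i := fun i => by
    split_ifs with hi
    · rfl
    · rw [Finset.union_comm, ← hnd.notMem_a10_iff, ← not_or, not_not] at hi
      exact (hτ i hi).symm
  have key := hnd.2.1 (fun p => lam (.inl p)) (extMult lam) 0 0 τ 0 (fun _ => rfl) (by
    rw [sum_smul_ex, sum_smul_pair_zero, sum_smul_pair_zero]
    refine Prod.ext (funext fun i => ?_) (funext fun i => ?_)
    · have := h i
      rw [sum_actFun D x _ fun φ => grad φ x i, ← hτ' i] at this
      simpa using this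
    · simp)
  refine ⟨funext fun k => ?_, funext fun i => ?_⟩
  · rcases k with p | q
    · exact key.1 p
    · simpa [extMult, q.2] using key.2.1 q q.2
  · rw [← hτ' i]
    split_ifs with hi
    · exact key.2.2.2.2.1 i hi
    · rfl

end TStationary

theorem dot_add_left (a b v : Vec n) : dot (a + b) v = dot a v + dot b v := add_dotProduct a b v

theorem dot_sub_left (a b v : Vec n) : dot (a - b) v = dot a v - dot b v := sub_dotProduct a b v

theorem dot_neg_left (a v : Vec n) : dot (-a) v = -dot a v := neg_dotProduct a v

theorem dot_const_left (r : ℝ) (v : Vec n) : dot (fun _ => r) v = r * ∑ i, v i :=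
  (Finset.mul_sum ..).symm

theorem hess_LagR (D : Setting n P Q) (x y : Vec n) (M : TMult n P Q) (ξ ζ : Vec n × Vec n) :
    hess (LagR D x y M) (x, y) ξ ζ
      = lagForm D.f (actFun D x) x (actMult D x M) ξ.1 ζ.1 := by
  rw [hess_eq (contDiff_lag D.hf (contDiff_actFun D x) (actMult D x M))
    (M.mu3 * (n - D.s) - ∑ i ∈ Eact D y, M.mu2 i * (1 + D.ε)) (-sigma x y M)
    (D.c + (fun i => if i ∈ Eact D y then M.mu2 i else 0) - (fun _ => M.mu3)
      - (fun i => if i ∈ a10 x y then M.sig2 i else 0)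
      - fun i => if i ∈ a00 x y then M.rho2 i else 0) 0,
    sndDeriv_lag D.hf (contDiff_actFun D x), lagForm_symm D.hf (contDiff_actFun D x)]
  · simp
  · intro z
    have hsum : ∑ q ∈ Q0 D x, extMult (actMult D x M) q * D.g q z.1
        = ∑ q ∈ Q0 D x, M.mu1 q * D.g q z.1 :=
      Finset.sum_congr rfl fun q hq => by rw [actMult, extMult_elim _ _ hq]
    have hσ : sigma x y M = (fun i => if i ∈ a01 x y then M.sig1 i else 0)
        + fun i => if i ∈ a00 x y then M.rho1 i else 0 := rfl
    simp only [LagR, Pi.zero_apply, zero_mul, Finset.sum_const_zero, sub_zero, mul_sub, Finset.sum_sub_distrib, Finset.sum_add_distrib, sum_ite_mul_eq,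
      dot_add_left, dot_sub_left, dot_neg_left, dot_const_left, hσ,
      sum_actFun D x _ fun φ => φ z.1, hsum]
    simp only [actMult, Sum.elim_inl]
    ring

section TStationary

variable {D : Setting n P Q} {x y : Vec n} {M : TMult n P Q} (hnd : NondegTStatAt D x y M)
include hnd

theorem NondegTStatAt.inTR_iff {ξ : Vec n × Vec n} : inTR D x y ξ ↔
    ((∀ k, dot (grad (actFun D x k) x) ξ.1 = 0) ∧
      ∀ i, kindOf D x y M i ≠ .zero → kindOf D x y M i ≠ .hyper → ξ.1 i = 0) ∧ ξ.2 = 0 := by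
  constructor
  · rintro ⟨h1, h2, h3, h4, h5, h6⟩
    refine ⟨⟨fun k => ?_, fun i hi hi' => h5 i (hnd.notMem_a10_iff.1 ⟨hi, hi'⟩)⟩, ?_⟩
    · rcases k with p | q
      · exact h1 p
      · exact h2 q q.2
    · obtain ⟨i₀, hi₀⟩ := hnd.exists_free
      have h0 : ∀ i ≠ i₀, ξ.2 i = 0 := fun i hi => by
        by_cases hE : y i = 1 + D.ε
        · exact h3 i (by simp [Eact, hE])
        · rcases (hnd.nonneg i).eq_or_lt with hy | hy
          · refine h6 i ?_
            by_cases hx : x i = 0 <;> simp [a00, a10, hx, ← hy]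
          · exact absurd (D.hcinj ((hnd.eq_of_free hE hy).trans
              (hnd.eq_of_free hi₀.1 hi₀.2).symm)) hi
      have hsum := h4 hnd.sum_eq
      rw [Fintype.sum_eq_single i₀ h0] at hsum
      funext i
      by_cases hi : i = i₀
      · rw [hi, hsum, Pi.zero_apply]
      · exact h0 i hi
  · rintro ⟨⟨h1, h2⟩, h3⟩
    exact ⟨fun p => h1 (.inl p), fun q hq => h1 (.inr ⟨q, hq⟩), fun i _ => by simp [h3],
      fun _ => by simp [h3], fun i hi => have := hnd.notMem_a10_iff.2 hi; h2 i this.1 this.2,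
      fun i _ => by simp [h3]⟩

/-- The local data of a nondegenerate T-stationary point. -/
def localData (hσ : ∀ i ∈ a01 x y, M.sig1 i ≠ 0) (i₀ : Fin n) (hi₀ : y i₀ ≠ 1 + D.ε ∧ 0 < y i₀) :
    LocalData n (P ⊕ {q // q ∈ Q0 D x}) where
  f := D.f
  ψ := actFun D x
  c := D.c
  x := x
  y := y
  σ := sigma x y M
  s := signOf x y M
  κ := actMult D x M
  μ := M.mu3
  u := 1 + D.ε
  tot := n - D.s
  kind := kindOf D x y M
  i₀ := i₀
  contDiff_f := D.hf
  contDiff_ψ := contDiff_actFun D x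
  stat := hnd.1.fst_eq
  ψ_eq
    | .inl p => hnd.1.1.1 p
    | .inr q => (Finset.mem_filter.1 q.2).2
  sum_y := hnd.sum_eq
  u_pos := by linarith [D.hεpos]
  free_iff i := by
    rw [kindOf_eq_free]
    refine ⟨fun h => D.hcinj ?_, fun h => h ▸ hi₀⟩
    rw [hnd.eq_of_free h.1 h.2, hnd.eq_of_free hi₀.1 hi₀.2]
  sign i := by
    unfold signOf
    split_ifs <;> simp
  upper i hi := by
    have hy := kindOf_eq_upper.1 hi
    have hpos : 0 < y i := by rw [hy]; linarith [D.hεpos]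
    have hx := hnd.fst_eq_zero hpos
    exact ⟨hx, hy, hnd.sign_mul_sigma_pos hσ (hnd.notMem_a10_iff.1 (by simp [hi])),
      hnd.lt_of_upper hy⟩
  free i hi := by
    have hy := kindOf_eq_free.1 hi
    exact ⟨hnd.fst_eq_zero hy.2, hy.2, lt_of_le_of_ne (hnd.1.1.2.2.2.2 i).2 hy.1,
      hnd.sign_mul_sigma_pos hσ (hnd.notMem_a10_iff.1 (by simp [hi])), hnd.eq_of_free hy.1 hy.2⟩
  zero i hi := by
    have h := hnd.kindOf_zero_or_hyper.1 (.inl hi)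
    have h' : x i ≠ 0 ∧ y i = 0 := by simpa [a10] using h
    refine ⟨h'.1, h'.2, by simp [sigma, a01, a00, h'.1], ?_⟩
    unfold kindOf at hi
    split_ifs at hi
    assumption
  hyper i hi := by
    have h := hnd.kindOf_zero_or_hyper.1 (.inr hi)
    have h' : x i ≠ 0 ∧ y i = 0 := by simpa [a10] using h
    refine ⟨?_, h'.2, by simp [sigma, a01, a00, h'.1], ?_⟩
    · rw [signOf, if_neg h'.1]
      split_ifs with h0
      · linarith
      · linarith [lt_of_le_of_ne (not_lt.1 h0) h'.1]
    · have hne : i ≠ i₀ := fun h => by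
        rw [h] at h'
        exact hi₀.2.ne' h'.2
      unfold kindOf at hi
      split_ifs at hi with h1 h2 h3 h4
      exact lt_of_le_of_ne (not_lt.1 h4) fun h => hne (D.hcinj
        (h.trans (hnd.eq_of_free hi₀.1 hi₀.2).symm))
  biact i hi := by
    have h := hnd.kindOf_eq_biact.1 hi
    have h' : x i = 0 ∧ y i = 0 := by simpa [a00] using h
    exact ⟨h'.1, h'.2, hnd.sign_mul_sigma_pos hσ (Finset.mem_union_left _ h), hnd.lt_of_biact h⟩
  licq := hnd.licq
  nondeg v h1 h2 h3 := by
    refine congrArg Prod.fst (hnd.2.2.2.2.2.2 (v, 0) (hnd.inTR_iff.2 ⟨⟨h1, h2⟩, rfl⟩) fun ζ hζ => ?_)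
    rw [hess_LagR]
    exact h3 ζ.1 (hnd.inTR_iff.1 hζ).1.1 (hnd.inTR_iff.1 hζ).1.2

theorem NondegTStatAt.TIndex_eq (hσ : ∀ i ∈ a01 x y, M.sig1 i ≠ 0) (i₀ : Fin n)
    (hi₀ : y i₀ ≠ 1 + D.ε ∧ 0 < y i₀) : TIndex D x y M
      = negIndex (fun ξ ζ => (localData hnd hσ i₀ hi₀).hess₀ ξ.1 ζ.1)
          (fun ξ => ξ.1 ∈ (localData hnd hσ i₀ hi₀).tangent₀ ∧ ξ.2 = 0)
        + Fintype.card {i // (localData hnd hσ i₀ hi₀).kind i = .biact} := by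
  unfold TIndex
  congr 1
  · congr 1
    · exact funext fun ξ => funext fun ζ => hess_LagR D x y M ξ ζ
    · exact funext fun ξ => propext hnd.inTR_iff
  · exact (Fintype.card_of_subtype _ fun i => hnd.kindOf_eq_biact.symm).symm

end TStationary

/-! ### Karush–Kuhn–Tucker points of the regularization -/

/-- The multipliers of the regularization given by a solution of the stationarity system. -/
def regMult (D : Setting n P Q) {x : Vec n} (z : State n (P ⊕ {q // q ∈ Q0 D x})) :
    SMult n P Q where
  lam p := z.2.1 (.inl p)
  mu1 := extMult z.2.1
  mu2 i := z.2.2.2.2 - D.c i + z.1 i * z.2.2.2.1 i / z.2.2.1 i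
  mu3 := z.2.2.2.2
  etaGe i := z.2.2.2.1 i / z.2.2.1 i
  etaLe i := -(z.2.2.2.1 i / z.2.2.1 i)
  nu i := D.c i - z.2.2.2.2

section Regularized

variable {D : Setting n P Q} {x y : Vec n} {M : TMult n P Q} {hnd : NondegTStatAt D x y M}
  {hσ : ∀ i ∈ a01 x y, M.sig1 i ≠ 0} {i₀ : Fin n} {hi₀ : y i₀ ≠ 1 + D.ε ∧ 0 < y i₀}
  {w : State n (P ⊕ {q // q ∈ Q0 D x}) × ℝ} (hw : (localData hnd hσ i₀ hi₀).IsRegular w)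
include hw

namespace LocalData.IsRegular

theorem mem_Eact {i : Fin n} : i ∈ Eact D w.1.2.2.1 ↔ kindOf D x y M i = .upper := by
  rw [Eact, Finset.mem_filter, and_iff_right (Finset.mem_univ i)]
  exact ⟨fun h => by_contra fun hk => (hw.y_lt i hk).ne h, fun h => (hw.upper i h).1⟩

theorem mem_Nact {i : Fin n} : i ∈ Nact w.1.2.2.1 ↔ kindOf D x y M i = .zero := by
  rw [Nact, Finset.mem_filter, and_iff_right (Finset.mem_univ i)]
  exact ⟨fun h => by_contra fun hk => (hw.y_pos i hk).ne' h, fun h => (hw.zero i h).1⟩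

theorem mem_Hge {i : Fin n} : i ∈ Hge (w.2 ^ 4) w.1.1 w.1.2.2.1 ↔
    kindOf D x y M i ≠ .zero ∧ signOf x y M i = 1 := by
  have ht : 0 < w.2 ^ 4 := pow_pos hw.pos 4
  rw [Hge, Finset.mem_filter, and_iff_right (Finset.mem_univ i)]
  by_cases hk : kindOf D x y M i = .zero
  · simp [hk, (hw.zero i hk).1, hw.pos.ne']
  · have h : w.1.1 i * w.1.2.2.1 i = -(signOf x y M i * w.2 ^ 4) := hw.mul_eq i hk
    rw [h, neg_inj, mul_eq_right₀ ht.ne', and_iff_right hk]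

theorem mem_Hle {i : Fin n} : i ∈ Hle (w.2 ^ 4) w.1.1 w.1.2.2.1 ↔
    kindOf D x y M i ≠ .zero ∧ signOf x y M i = -1 := by
  have ht : 0 < w.2 ^ 4 := pow_pos hw.pos 4
  rw [Hle, Finset.mem_filter, and_iff_right (Finset.mem_univ i)]
  by_cases hk : kindOf D x y M i = .zero
  · simp [hk, (hw.zero i hk).1, ht.ne]
  · have h : w.1.1 i * w.1.2.2.1 i = -(signOf x y M i * w.2 ^ 4) := hw.mul_eq i hk
    rw [h, ← neg_mul, mul_eq_right₀ ht.ne', and_iff_right hk, neg_eq_iff_eq_neg]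

theorem mem_Hact {i : Fin n} : i ∈ Hact (w.2 ^ 4) w.1.1 w.1.2.2.1 ↔
    kindOf D x y M i ≠ .zero := by
  rw [Hact, Finset.mem_union, hw.mem_Hge, hw.mem_Hle, ← and_or_left]
  exact and_iff_left ((localData hnd hσ i₀ hi₀).sign i)

theorem sum_eta (i : Fin n) :
    (if i ∈ Hge (w.2 ^ 4) w.1.1 w.1.2.2.1 then (regMult D w.1).etaGe i else 0)
      - (if i ∈ Hle (w.2 ^ 4) w.1.1 w.1.2.2.1 then (regMult D w.1).etaLe i else 0)
      = (localData hnd hσ i₀ hi₀).eta w i := by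
  have heta : (localData hnd hσ i₀ hi₀).eta w i
    = if kindOf D x y M i = .zero then 0 else w.1.2.2.2.1 i / w.1.2.2.1 i := rfl
  have hs : signOf x y M i = 1 ∨ signOf x y M i = -1 := (localData hnd hσ i₀ hi₀).sign i
  rw [heta]
  simp only [hw.mem_Hge, hw.mem_Hle, regMult]
  by_cases hk : kindOf D x y M i = .zero
  · simp [hk]
  · rcases hs with h | h <;> norm_num [hk, h]

theorem eta_mul_y (i : Fin n) :
    (localData hnd hσ i₀ hi₀).eta w i * w.1.2.2.1 i = w.1.2.2.2.1 i := by
  have heta : (localData hnd hσ i₀ hi₀).eta w i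
    = if kindOf D x y M i = .zero then 0 else w.1.2.2.2.1 i / w.1.2.2.1 i := rfl
  rw [heta]
  split_ifs with hk
  · rw [zero_mul, (hw.zero i hk).2.1]
  · exact div_mul_cancel₀ _ (hw.y_pos i hk).ne'

theorem snd_eq (i : Fin n) : D.c i
    = -(if i ∈ Eact D w.1.2.2.1 then (regMult D w.1).mu2 i else 0) + w.1.2.2.2.2
      + (localData hnd hσ i₀ hi₀).eta w i * w.1.1 i
      + if i ∈ Nact w.1.2.2.1 then (regMult D w.1).nu i else 0 := by
  have heta : (localData hnd hσ i₀ hi₀).eta w i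
    = if kindOf D x y M i = .zero then 0 else w.1.2.2.2.1 i / w.1.2.2.1 i := rfl
  rw [heta]
  simp only [hw.mem_Eact, hw.mem_Nact, regMult]
  by_cases hk : kindOf D x y M i = .zero
  · simp [hk]
  by_cases hE : kindOf D x y M i = .upper
  · simp [hE]
    ring
  · have h : w.1.2.2.2.1 i * w.1.1 i = (D.c i - w.1.2.2.2.2) * w.1.2.2.1 i := hw.mult_eq i hk hE
    have hy := (hw.y_pos i hk).ne'
    simp only [hk, hE, if_false, neg_zero, zero_add, add_zero]
    field_simp
    linarith

variable (hg : ∀ q ∉ Q0 D x, 0 < D.g q w.1.1)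
include hg

theorem Q0_eq : Q0 D w.1.1 = Q0 D x := by
  ext q
  rw [Q0, Finset.mem_filter, and_iff_right (Finset.mem_univ q)]
  exact ⟨fun h => by_contra fun hq => (hg q hq).ne' h, fun h => hw.ψ_eq (.inr ⟨q, h⟩)⟩

theorem feasS : feasS D (w.2 ^ 4) w.1.1 w.1.2.2.1 := by
  have ht : 0 < w.2 ^ 4 := pow_pos hw.pos 4
  refine ⟨fun p => hw.ψ_eq (.inl p), fun q => ?_, hw.sum_y.ge, fun i => ?_, fun i => ⟨?_, ?_⟩⟩
  · by_cases hq : q ∈ Q0 D x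
    · exact (hw.ψ_eq (.inr ⟨q, hq⟩)).ge
    · exact (hg q hq).le
  · by_cases hk : kindOf D x y M i = .zero
    · simp [(hw.zero i hk).1, ht.le]
    · rw [hw.mul_eq i hk]
      rcases (localData hnd hσ i₀ hi₀).sign i with h | h <;> rw [h] <;> constructor <;> linarith
  · by_cases hk : kindOf D x y M i = .zero
    · exact (hw.zero i hk).1.ge
    · exact (hw.y_pos i hk).le
  · by_cases hk : kindOf D x y M i = .upper
    · exact (hw.upper i hk).1.le
    · exact (hw.y_lt i hk).le

theorem kktEq : KKTEq D (w.2 ^ 4) w.1.1 w.1.2.2.1 (regMult D w.1) := by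
  rw [KKTEq, hw.Q0_eq hg, sum_smul_ey, sum_smul_ey, sum_smul_hvec, sum_smul_hvec,
    sum_smul_pair_zero, sum_smul_pair_zero]
  refine Prod.ext (funext fun i => ?_) (funext fun i => ?_)
  · have h : grad D.f w.1.1 i - ∑ k, w.1.2.1 k * grad (actFun D x k) w.1.1 i
      - w.1.2.2.2.1 i = 0 := hw.stat i
    rw [sum_actFun D x _ fun φ => grad φ w.1.1 i, ← hw.eta_mul_y, ← hw.sum_eta] at h
    simp only [eAll, Prod.fst_add, Prod.fst_sub, Prod.smul_fst, Pi.add_apply, Pi.sub_apply,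
      Pi.zero_apply, smul_zero, sub_zero, add_zero]
    simp only [sub_mul, ite_mul, zero_mul] at h
    simp only [regMult] at h ⊢
    linarith
  · have h := hw.snd_eq i
    rw [← hw.sum_eta, sub_mul, ite_mul, ite_mul] at h
    simp only [eAll, Prod.snd_add, Prod.snd_sub, Prod.smul_snd, Pi.add_apply, Pi.sub_apply,
      Pi.neg_apply, Pi.smul_apply, smul_eq_mul, mul_one, add_zero, zero_sub]
    simp only [zero_mul] at h
    have hμ : (regMult D w.1).mu3 = w.1.2.2.2.2 := rfl
    rw [hμ]
    linarith

theorem licq (hind : ∀ (lam : P ⊕ {q // q ∈ Q0 D x} → ℝ) (ν : Vec n) (m : ℝ) (e : Vec n),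
      (∀ i, kindOf D x y M i ≠ .upper → kindOf D x y M i ≠ .zero → ν i = 0) →
      (∀ i, kindOf D x y M i = .zero → e i = 0) →
      (∀ i, ∑ k, lam k * grad (actFun D x k) w.1.1 i + e i * w.1.2.2.1 i = 0) →
      (∀ i, ν i + m + e i * w.1.1 i = 0) → lam = 0 ∧ ν = 0 ∧ m = 0 ∧ e = 0) :
    LICQ D (w.2 ^ 4) w.1.1 w.1.2.2.1 := by
  intro lam mu1 mu2 mu3 eta nu _ hsum
  rw [hw.Q0_eq hg, sum_smul_ey, sum_smul_ey, sum_smul_hvec,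
    sum_smul_pair_zero, sum_smul_pair_zero] at hsum
  have h1 := fun i => congrFun (congrArg Prod.fst hsum) i
  have h2 := fun i => congrFun (congrArg Prod.snd hsum) i
  simp only [eAll, Prod.fst_add, Prod.smul_fst, Pi.add_apply, Prod.snd_add, Prod.smul_snd,
    Prod.fst_zero, Prod.snd_zero, Pi.zero_apply, Pi.smul_apply, smul_eq_mul, mul_one, smul_zero,
    add_zero, zero_add, hw.mem_Eact, hw.mem_Nact, hw.mem_Hact] at h1 h2
  obtain ⟨k1, k2, k3, k4⟩ := hind (Sum.elim lam fun q => mu1 q)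
    (fun i => (if kindOf D x y M i = .upper then mu2 i else 0)
      + if kindOf D x y M i = .zero then nu i else 0) mu3
    (fun i => if kindOf D x y M i ≠ .zero then eta i else 0)
    (fun i hi hi' => by simp [hi, hi']) (fun i hi => by simp [hi])
    (fun i => by
      have hmu : ∑ q ∈ Q0 D x, extMult (Sum.elim lam fun q => mu1 q) q * grad (D.g q) w.1.1 i
          = ∑ q ∈ Q0 D x, mu1 q * grad (D.g q) w.1.1 i :=
        Finset.sum_congr rfl fun q hq => by rw [extMult_elim _ _ hq]
      rw [sum_actFun D x _ fun φ => grad φ w.1.1 i, hmu, ite_mul, zero_mul]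
      exact h1 i)
    (fun i => by
      have := h2 i
      rw [ite_mul, zero_mul]
      linarith)
  have k2' := fun i => congrFun k2 i
  have k4' := fun i => congrFun k4 i
  simp only [Pi.zero_apply] at k2' k4'
  refine ⟨fun p => congrFun k1 (.inl p), fun q hq => ?_, fun i hi => ?_, k3, fun i hi => ?_,
    fun i hi => ?_⟩
  · exact congrFun k1 (.inr ⟨q, hw.Q0_eq hg ▸ hq⟩)
  · simpa [hw.mem_Eact.1 hi] using k2' i
  · simpa [hw.mem_Hact.1 hi] using k4' i
  · simpa [hw.mem_Nact.1 hi] using k2' i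

theorem inTS_iff {ξ : Vec n × Vec n} :
    inTS D (w.2 ^ 4) w.1.1 w.1.2.2.1 ξ ↔ (localData hnd hσ i₀ hi₀).tangent w ξ := by
  simp only [inTS, hw.Q0_eq hg, hw.mem_Eact, hw.mem_Nact, hw.mem_Hact]
  constructor
  · rintro ⟨h1, h2, h3, h4, h5, h6⟩
    refine ⟨?_, fun i hi => hi.elim (h3 i) (h6 i), h4 hw.sum_y, h5⟩
    rintro (p | q)
    · exact h1 p
    · exact h2 q q.2
  · rintro ⟨h1, h2, h3, h4⟩
    exact ⟨fun p => h1 (.inl p), fun q hq => h1 (.inr ⟨q, hq⟩), fun i hi => h2 i (.inl hi),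
      fun _ => h3, h4, fun i hi => h2 i (.inr hi)⟩

theorem hess_LagS (ξ ζ : Vec n × Vec n) :
    hess (LagS D (w.2 ^ 4) w.1.1 w.1.2.2.1 (regMult D w.1)) (w.1.1, w.1.2.2.1) ξ ζ
      = (localData hnd hσ i₀ hi₀).hessReg w ξ ζ := by
  rw [LocalData.hessReg_apply, hess_eq (contDiff_lag D.hf (contDiff_actFun D x) w.1.2.1)
    (w.1.2.2.2.2 * (n - D.s)
      - ∑ i ∈ Eact D w.1.2.2.1, (regMult D w.1).mu2 i * (1 + D.ε)
      - ∑ i ∈ Hge (w.2 ^ 4) w.1.1 w.1.2.2.1, (regMult D w.1).etaGe i * w.2 ^ 4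
      - ∑ i ∈ Hle (w.2 ^ 4) w.1.1 w.1.2.2.1, (regMult D w.1).etaLe i * w.2 ^ 4) 0
    (D.c + (fun i => if i ∈ Eact D w.1.2.2.1 then (regMult D w.1).mu2 i else 0)
      - (fun _ => w.1.2.2.2.2)
      - fun i => if i ∈ Nact w.1.2.2.1 then (regMult D w.1).nu i else 0)
    ((localData hnd hσ i₀ hi₀).eta w),
    sndDeriv_lag D.hf (contDiff_actFun D x), lagForm_symm D.hf (contDiff_actFun D x)]
  · rfl
  · intro z
    have heta : ∑ i, (localData hnd hσ i₀ hi₀).eta w i * (z.1 i * z.2 i)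
        = ∑ i ∈ Hge (w.2 ^ 4) w.1.1 w.1.2.2.1, (regMult D w.1).etaGe i * (z.1 i * z.2 i)
          - ∑ i ∈ Hle (w.2 ^ 4) w.1.1 w.1.2.2.1, (regMult D w.1).etaLe i * (z.1 i * z.2 i) := by
      simp only [← hw.sum_eta, sub_mul, ite_mul, zero_mul, Finset.sum_sub_distrib,
        Finset.sum_ite_mem, Finset.univ_inter]
    rw [heta, dot_zero_left]
    simp only [LagS, hw.Q0_eq hg, mul_add, mul_sub, Finset.sum_sub_distrib,
      Finset.sum_add_distrib, dot_add_left, dot_sub_left, dot_const_left,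
      sum_actFun D x _ fun φ => φ z.1, ← sum_ite_mul_eq]
    simp only [regMult]
    ring

theorem nondegKKTAt (hκ : ∀ q, 0 < w.1.2.1 (.inr q)) (hμ : 0 < w.1.2.2.2.2)
    (hlicq : LICQ D (w.2 ^ 4) w.1.1 w.1.2.2.1)
    (hdet : ∀ ξ, (localData hnd hσ i₀ hi₀).tangent w ξ →
      (∀ ζ, (localData hnd hσ i₀ hi₀).tangent w ζ →
        (localData hnd hσ i₀ hi₀).hessReg w ξ ζ = 0) → ξ = 0) :
    NondegKKTAt D (w.2 ^ 4) w.1.1 w.1.2.2.1 (regMult D w.1) := by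
  have hmu1 : ∀ q ∈ Q0 D w.1.1, 0 < (regMult D w.1).mu1 q := fun q hq => by
    rw [hw.Q0_eq hg] at hq
    simpa [regMult, extMult, hq] using hκ ⟨q, hq⟩
  have hmu2 : ∀ i ∈ Eact D w.1.2.2.1, 0 < (regMult D w.1).mu2 i := fun i hi => by
    have h : D.c i - w.1.2.2.2.2 - w.1.1 i * w.1.2.2.2.1 i / w.1.2.2.1 i < 0 :=
      (hw.upper i (hw.mem_Eact.1 hi)).2
    simp only [regMult]
    linarith
  have hGe : ∀ i ∈ Hge (w.2 ^ 4) w.1.1 w.1.2.2.1, 0 < (regMult D w.1).etaGe i := fun i hi => by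
    have hi' := hw.mem_Hge.1 hi
    have h : 0 < signOf x y M i * w.1.2.2.2.1 i := hw.sign_pos i hi'.1
    rw [hi'.2, one_mul] at h
    exact div_pos h (hw.y_pos i hi'.1)
  have hLe : ∀ i ∈ Hle (w.2 ^ 4) w.1.1 w.1.2.2.1, 0 < (regMult D w.1).etaLe i := fun i hi => by
    have hi' := hw.mem_Hle.1 hi
    have h : 0 < signOf x y M i * w.1.2.2.2.1 i := hw.sign_pos i hi'.1
    rw [hi'.2, neg_one_mul, neg_pos] at h
    exact neg_pos.2 (div_neg_of_neg_of_pos h (hw.y_pos i hi'.1))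
  have hnu : ∀ i ∈ Nact w.1.2.2.1, 0 < (regMult D w.1).nu i := fun i hi =>
    sub_pos.2 (hw.zero i (hw.mem_Nact.1 hi)).2.2
  have hsum : ∑ i, w.1.2.2.1 i = (n : ℝ) - D.s := hw.sum_y
  refine ⟨⟨hw.feasS hg, fun q hq => (hmu1 q hq).le, fun i hi => (hmu2 i hi).le, hμ.le,
    by rw [hsum, sub_self, mul_zero], fun i hi => (hGe i hi).le, fun i hi => (hLe i hi).le,
    fun i hi => (hnu i hi).le, hw.kktEq hg⟩, hlicq, hmu1, hmu2, hGe, hLe, hnu, fun _ => hμ,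
    fun ξ hξ hζ => hdet ξ ((hw.inTS_iff hg).1 hξ) fun ζ h => ?_⟩
  rw [← hw.hess_LagS hg]
  exact hζ ζ ((hw.inTS_iff hg).2 h)

theorem qIdx_eq : QIdx D (w.2 ^ 4) w.1.1 w.1.2.2.1 (regMult D w.1)
    = negIndex (fun ξ ζ => (localData hnd hσ i₀ hi₀).hessReg w ξ ζ)
      ((localData hnd hσ i₀ hi₀).tangent w) := by
  unfold QIdx
  congr 1
  · exact funext fun ξ => funext fun ζ => hw.hess_LagS hg ξ ζ
  · exact funext fun ξ => propext (hw.inTS_iff hg)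

end LocalData.IsRegular

end Regularized

/-- Theorem 4: well-posedness of the Scholtes-type
regularization. Around a nondegenerate T-stationary point of R with T-index m
satisfying NDT6, S(t) possesses for all sufficiently small t > 0 a
nondegenerate KKT point with quadratic index m. -/
theorem statement16 {n : ℕ} {P Q : Type*} [Fintype P] [Fintype Q]
    (D : Setting n P Q) (xb yb : Vec n)
    (Mb : TMult n P Q) (hnd : NondegTStatAt D xb yb Mb)
    (m : ℕ) (hTI : TIndex D xb yb Mb = m)
    (hndt6 : ∀ i ∈ a01 xb yb, Mb.sig1 i ≠ 0) :
    ∀ U ∈ nhds ((xb, yb) : Vec n × Vec n), ∃ tbar > (0 : ℝ),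
      ∀ t : ℝ, 0 < t → t < tbar →
        ∃ x y : Vec n, ∃ M : SMult n P Q,
          ((x, y) : Vec n × Vec n) ∈ U ∧ NondegKKTAt D t x y M ∧
          QIdx D t x y M = m := by
  intro U hU
  obtain ⟨i₀, hi₀⟩ := hnd.exists_free
  set L := localData hnd hndt6 i₀ hi₀
  have hUev : ∀ᶠ w in L.near, (w.1.1, w.1.2.2.1) ∈ U :=
    L.tendsto_near (p := fun w => (w.1.1, w.1.2.2.1)) (by fun_prop) hU
  have hgev : ∀ᶠ w in L.near, ∀ q ∉ Q0 D xb, 0 < D.g q w.1.1 := by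
    refine eventually_all.2 fun q => ?_
    by_cases hq : q ∈ Q0 D xb
    · exact Eventually.of_forall fun _ h => absurd hq h
    · have hpos : 0 < D.g q xb := by
        refine lt_of_le_of_ne (hnd.1.1.2.1 q) fun h => hq ?_
        simp [Q0, ← h]
      have hc : Continuous (D.g q) := (D.hg q).continuous
      filter_upwards [(L.tendsto_near (p := fun w => D.g q w.1.1)
        (by fun_prop)).eventually_const_lt hpos] with w hw _ using hw
  have hκev : ∀ᶠ w in L.near, ∀ q, 0 < w.1.2.1 (.inr q) :=
    eventually_all.2 fun q => (L.tendsto_near (p := fun w => w.1.2.1 (.inr q))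
      (by fun_prop)).eventually_const_lt (hnd.2.2.1 q q.2)
  have hμev : ∀ᶠ w in L.near, 0 < w.1.2.2.2.2 :=
    (L.tendsto_near (p := fun w => w.1.2.2.2.2) (by fun_prop)).eventually_const_lt hnd.mu3_pos
  have hev : ∀ᶠ w in L.near, (w.1.1, w.1.2.2.1) ∈ U ∧
      NondegKKTAt D (w.2 ^ 4) w.1.1 w.1.2.2.1 (regMult D w.1) ∧
      QIdx D (w.2 ^ 4) w.1.1 w.1.2.2.1 (regMult D w.1) = m := by
    filter_upwards [hUev, hgev, hκev, hμev, L.eventually_nondegenerate]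
      with w hwU hg hκ hμ ⟨hw, hind, hdet, hidx⟩
    refine ⟨hwU, hw.nondegKKTAt hg hκ hμ (hw.licq hg hind) hdet, ?_⟩
    rw [hw.qIdx_eq hg, hidx, ← hTI, hnd.TIndex_eq hndt6 i₀ hi₀]
  obtain ⟨θ₀, hθ₀, hθ⟩ := mem_nhdsGT_iff_exists_Ioo_subset.1 (L.eventually_exists_solution hev)
  refine ⟨θ₀ ^ 4, pow_pos hθ₀ 4, fun t ht htlt => ?_⟩
  have hpos : 0 < √√t := Real.sqrt_pos.2 (Real.sqrt_pos.2 ht)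
  have hpow : √√t ^ 4 = t := by
    rw [show (4 : ℕ) = 2 * 2 from rfl, pow_mul, Real.sq_sqrt (Real.sqrt_nonneg t),
      Real.sq_sqrt ht.le]
  obtain ⟨z, hzU, hz, hzi⟩ := hθ ⟨hpos, lt_of_pow_lt_pow_left₀ 4 (le_of_lt hθ₀) (by rwa [hpow])⟩
  rw [hpow] at hz hzi
  exact ⟨z.1, z.2.2.1, regMult D z, hzU, hz, hzi⟩

end Scholtes
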